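/- Assume f satisfies (A1)–(A3) and fix χ > 0. Define q_ε(ŷ) := δ_ε · inf{e^{ε|m|} Q_ε(f̂^m(ŷ)) : m ≤ 0} and NUE^#_χ := {x̂ ∈ NUE*_χ : limsup_{n→+∞} q_ε(f̂^n(x̂)) > 0 and limsup_{n→−∞} q_ε(f̂^n(x̂)) > 0}. For all sufficiently small ε > 0 there exists a countable family 𝔄 of ε-charts such that, with Σ, σ, Σ^# as below and π : Σ → M̂ the map assigning to each ε-gpo the unique point of M̂ it shadows: (1) π is Hölder continuous, i.e. there are C > 0 and α ∈ (0,1] with d̂(π(v), π(w)) ≤ C·d(v,w)^α for all v, w ∈ Σ, where d(v, w) := exp(−min{|n| : v_n ≠ w_n}); (2) π ∘ σ = f̂ ∘ π; (3) π[Σ^#] ⊇ NUE^#_χ. -/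

import Mathlib

open Real MeasureTheory Filter Topology Metric Set

noncomputable section

namespace OneDim

/-- The interval `M = [0, 1/2]`. -/
def Mset : Set ℝ := Set.Icc 0 (1/2)

/-- Data of a piecewise `C^{1+β}` interval map `f : M → M` with discontinuity set `D`,
constants `β ∈ (0,1)`, `a, K > 1`, radius function `r` and inverse branches `g`. -/
structure GoodMap where
  f : ℝ → ℝ
  D : Set ℝ
  β : ℝ
  a : ℝ
  K : ℝ
  r : ℝ → ℝ
  g : ℝ → ℝ → ℝ
  hβ0 : 0 < β
  hβ1 : β < 1
  ha : 1 < a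
  hK : 1 < K
  hmaps : ∀ x ∈ Mset, f x ∈ Mset
  hD : D ⊆ Mset
  hdiff : DifferentiableOn ℝ f (Mset \ D)

namespace GoodMap

/-- The critical set `C = {x ∈ M \ D : df_x = 0}`. -/
def crit (F : GoodMap) : Set ℝ := {x | x ∈ Mset \ F.D ∧ deriv F.f x = 0}

/-- The singular set `S = C ∪ D`. -/
def S (F : GoodMap) : Set ℝ := F.crit ∪ F.D

/-- Distance to the singular set. -/
def dS (F : GoodMap) (x : ℝ) : ℝ := Metric.infDist x F.S

/-- Conditions (A1)–(A3). -/
def SatA (F : GoodMap) : Prop :=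
  ∀ x ∈ Mset, x ∉ F.S → F.f x ∉ F.S →
    (min (F.dS x ^ F.a) (F.dS (F.f x) ^ F.a) < F.r x ∧ F.r x < 1) ∧
    -- (A1)
    (Set.InjOn F.f (Metric.ball x (2 * F.r x)) ∧
      (∀ y ∈ Metric.ball x (2 * F.r x), DifferentiableAt ℝ F.f y) ∧
      F.g x (F.f x) = x ∧
      (∀ z ∈ Metric.ball (F.f x) (2 * F.r x), F.f (F.g x z) = z) ∧
      Set.InjOn (F.g x) (Metric.ball (F.f x) (2 * F.r x)) ∧
      (∀ z ∈ Metric.ball (F.f x) (2 * F.r x), DifferentiableAt ℝ (F.g x) z)) ∧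
    -- (A2)
    ((∀ y ∈ Metric.ball x (2 * F.r x),
        F.dS x ^ F.a ≤ |deriv F.f y| ∧ |deriv F.f y| ≤ F.dS x ^ (-F.a)) ∧
      (∀ z ∈ Metric.ball (F.f x) (2 * F.r x),
        F.dS x ^ F.a ≤ |deriv (F.g x) z| ∧ |deriv (F.g x) z| ≤ F.dS x ^ (-F.a))) ∧
    -- (A3)
    ((∀ y ∈ Metric.ball x (2 * F.r x), ∀ z ∈ Metric.ball x (2 * F.r x),
        |deriv F.f y - deriv F.f z| ≤ F.K * |y - z| ^ F.β) ∧
      (∀ y ∈ Metric.ball (F.f x) (2 * F.r x), ∀ z ∈ Metric.ball (F.f x) (2 * F.r x),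
        |deriv (F.g x) y - deriv (F.g x) z| ≤ F.K * |y - z| ^ F.β))

end GoodMap

/-- Membership in the natural extension space `M̂`. -/
def inMhat (f : ℝ → ℝ) (x : ℤ → ℝ) : Prop :=
  (∀ n, x n ∈ Mset) ∧ ∀ n : ℤ, f (x (n - 1)) = x n

/-- The natural extension map `f̂` (left shift). -/
def fhat (x : ℤ → ℝ) : ℤ → ℝ := fun n => x (n + 1)

/-- Iterate `f̂^k` of the natural extension map, `k ∈ ℤ`. -/
def fhatI (k : ℤ) (x : ℤ → ℝ) : ℤ → ℝ := fun n => x (n + k)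

/-- The metric `d̂(x̂,ŷ) = sup{2^n d(x_n,y_n) : n ≤ 0}` on `M̂`. -/
def dhat (x y : ℤ → ℝ) : ℝ :=
  sSup {t : ℝ | ∃ n : ℤ, n ≤ 0 ∧ t = (2:ℝ) ^ n * |x n - y n|}

/-- The invertible derivative cocycle `d̂f^{(n)}` over `f̂`. -/
def dfhat (f : ℝ → ℝ) (x : ℤ → ℝ) (n : ℤ) : ℝ :=
  if 0 ≤ n then ∏ j ∈ Finset.range n.toNat, deriv f (x (j : ℤ))
  else (∏ j ∈ Finset.range (-n).toNat, deriv f (x (-(j : ℤ) - 1)))⁻¹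

/-- The Pesin parameter `u(x̂)`. -/
def uPes (f : ℝ → ℝ) (χ : ℝ) (x : ℤ → ℝ) : ℝ :=
  Real.sqrt (∑' n : ℕ, Real.exp (2 * (n:ℝ) * χ) * (dfhat f x (-(n:ℤ))) ^ 2)

/-- The Pesin chart `Ψ_{x̂}(t) = t/u(x̂) + x₀`. -/
def Psi (f : ℝ → ℝ) (χ : ℝ) (x : ℤ → ℝ) (t : ℝ) : ℝ := t / uPes f χ x + x 0

/-- The set `NUE_χ`. -/
def NUE (F : GoodMap) (χ : ℝ) : Set (ℤ → ℝ) :=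
  {x | inMhat F.f x ∧ (∀ n, x n ∉ F.S) ∧
    (∃ l > χ, Tendsto (fun n : ℕ => Real.log |dfhat F.f x (n:ℤ)| / (n:ℝ)) atTop (𝓝 l)) ∧
    (∃ l > χ, Tendsto (fun n : ℕ => Real.log |dfhat F.f x (-(n:ℤ))| / (-(n:ℝ))) atTop (𝓝 l))}

/-- `ρ(x̂) = d({x₋₁,x₀,x₁}, S)`. -/
def rho (F : GoodMap) (x : ℤ → ℝ) : ℝ :=
  min (F.dS (x (-1))) (min (F.dS (x 0)) (F.dS (x 1)))

/-- `I_ε = {e^{-εn/3} : n ≥ 0}`. -/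
def Ieps (ε : ℝ) : Set ℝ := {q | ∃ n : ℕ, q = Real.exp (-(ε * n) / 3)}

/-- `Q̃_ε(x̂)`. -/
def Qtilde (F : GoodMap) (χ ε : ℝ) (x : ℤ → ℝ) : ℝ :=
  ε ^ (3 / F.β) *
    min (uPes F.f χ x ^ (-(24 / F.β)))
      (uPes F.f χ (fhatI (-1) x) ^ (-(12 / F.β)) * rho F x ^ (72 * F.a / F.β))

/-- `Q_ε(x̂) = max{q ∈ I_ε : q ≤ Q̃_ε(x̂)}`. -/
def Qeps (F : GoodMap) (χ ε : ℝ) (x : ℤ → ℝ) : ℝ :=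
  sSup {q | q ∈ Ieps ε ∧ q ≤ Qtilde F χ ε x}

/-- The regular set. -/
def Reg (F : GoodMap) : Set (ℤ → ℝ) :=
  {x | inMhat F.f x ∧ (∀ n, x n ∉ F.S) ∧
    Tendsto (fun n : ℕ => Real.log (F.dS (x (n:ℤ))) / (n:ℝ)) atTop (𝓝 0) ∧
    Tendsto (fun n : ℕ => Real.log (F.dS (x (-(n:ℤ)))) / (n:ℝ)) atTop (𝓝 0)}

/-- The set `NUE*_χ`. -/
def NUEstar (F : GoodMap) (χ : ℝ) : Set (ℤ → ℝ) :=
  {x | x ∈ NUE F χ ∧ x ∈ Reg F ∧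
    (∃ nk : ℕ → ℤ, Tendsto nk atTop atBot ∧
      Tendsto (fun k => uPes F.f χ (fhatI (nk k) x)) atTop (𝓝 (uPes F.f χ x))) ∧
    Tendsto (fun n : ℕ => Real.log (uPes F.f χ (fhatI (-(n:ℤ)) x)) / (-(n:ℝ))) atTop (𝓝 0)}

/-- An ε-chart is a pair `(x̂, p)`, representing `Ψ_{x̂}` restricted to `[-p,p]`. -/
structure Chart where
  x : ℤ → ℝ
  p : ℝ

/-- `(x̂, p)` is a genuine ε-chart. -/
def IsChart (F : GoodMap) (χ ε : ℝ) (c : Chart) : Prop :=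
  c.x ∈ NUE F χ ∧ 0 < c.p ∧ c.p ≤ Qeps F χ ε c.x

/-- ε-overlap of two ε-charts. -/
def Overlap (F : GoodMap) (χ ε : ℝ) (c₁ c₂ : Chart) : Prop :=
  Real.exp (-ε) ≤ c₁.p / c₂.p ∧ c₁.p / c₂.p ≤ Real.exp ε ∧
  |c₁.x 0 - c₂.x 0| + |(uPes F.f χ c₁.x)⁻¹ - (uPes F.f χ c₂.x)⁻¹| < (c₁.p * c₂.p) ^ 4

/-- `g_{x̂} = g_{x₋₁}`, the inverse branch of `f` taking `x₀` to `x₋₁`. -/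
def ghat (F : GoodMap) (x : ℤ → ℝ) : ℝ → ℝ := F.g (x (-1))

/-- `G_{x̂} = Ψ_{f̂⁻¹x̂}⁻¹ ∘ g_{x̂} ∘ Ψ_{x̂}`. -/
def Gmap (F : GoodMap) (χ : ℝ) (x : ℤ → ℝ) (t : ℝ) : ℝ :=
  uPes F.f χ (fhatI (-1) x) * (ghat F x (Psi F.f χ x t) - x (-1))

/-- `G_{x̂,ŷ} = Ψ_{ŷ}⁻¹ ∘ g_{x̂} ∘ Ψ_{x̂}`. -/
def Gmap2 (F : GoodMap) (χ : ℝ) (x y : ℤ → ℝ) (t : ℝ) : ℝ :=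
  uPes F.f χ y * (ghat F x (Psi F.f χ x t) - y 0)

/-- `F_{x̂} = Ψ_{f̂x̂}⁻¹ ∘ f ∘ Ψ_{x̂}`. -/
def Fmap (F : GoodMap) (χ : ℝ) (x : ℤ → ℝ) (t : ℝ) : ℝ :=
  uPes F.f χ (fhat x) * (F.f (Psi F.f χ x t) - x 1)

/-- `δ_ε = e^{-εn}` where `n` is the unique positive integer with `e^{-εn} < ε ≤ e^{-ε(n-1)}`. -/
def deltaEps (ε : ℝ) : ℝ :=
  Real.exp (-(ε * ((⌊Real.log (1 / ε) / ε⌋ + 1 : ℤ) : ℝ)))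

/-- Weak edge `v ⤎ w` (from `w = Ψ_{x̂}^p` to `v = Ψ_{ŷ}^q`). -/
def WeakEdge (F : GoodMap) (χ ε : ℝ) (v w : Chart) : Prop :=
  IsChart F χ ε v ∧ IsChart F χ ε w ∧
  Overlap F χ ε ⟨fhatI (-1) w.x, v.p⟩ v ∧
  w.p ≤ Real.exp ε * v.p

/-- Edge `v ← w` (from `w = Ψ_{x̂}^p` to `v = Ψ_{ŷ}^q`). -/
def Edge (F : GoodMap) (χ ε : ℝ) (v w : Chart) : Prop :=
  IsChart F χ ε v ∧ IsChart F χ ε w ∧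
  Overlap F χ ε ⟨fhatI (-1) w.x, v.p⟩ v ∧
  |v.x 1 - w.x 0| < v.p ∧
  Real.exp (-v.p) ≤ uPes F.f χ (fhat v.x) / uPes F.f χ w.x ∧
  uPes F.f χ (fhat v.x) / uPes F.f χ w.x ≤ Real.exp v.p ∧
  w.p = min (Real.exp ε * v.p) (deltaEps ε * Qeps F χ ε w.x)

/-- ε-generalized pseudo-orbit. -/
def IsGPO (F : GoodMap) (χ ε : ℝ) (v : ℤ → Chart) : Prop :=
  ∀ n : ℤ, Edge F χ ε (v n) (v (n + 1))

/-- weak ε-generalized pseudo-orbit. -/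
def IsWeakGPO (F : GoodMap) (χ ε : ℝ) (v : ℤ → Chart) : Prop :=
  ∀ n : ℤ, WeakEdge F χ ε (v n) (v (n + 1))

/-- The range `Ψ_{x̂}([-p,p])` of an ε-chart. -/
def chartRange (F : GoodMap) (χ : ℝ) (c : Chart) : Set ℝ :=
  Psi F.f χ c.x '' Set.Icc (-c.p) c.p

/-- A bi-infinite sequence of ε-charts shadows `x̂ ∈ M̂`. -/
def Shadows (F : GoodMap) (χ : ℝ) (v : ℤ → Chart) (x : ℤ → ℝ) : Prop :=
  inMhat F.f x ∧ ∀ n : ℤ, x n ∈ chartRange F χ (v n)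

/-- `q_ε(x̂) = δ_ε inf{e^{ε|m|} Q_ε(f̂^m x̂) : m ≤ 0}`. -/
def qeps (F : GoodMap) (χ ε : ℝ) (x : ℤ → ℝ) : ℝ :=
  deltaEps ε *
    sInf {t : ℝ | ∃ m : ℤ, m ≤ 0 ∧ t = Real.exp (ε * |(m:ℝ)|) * Qeps F χ ε (fhatI m x)}

/-- Recurrence: some symbol repeats infinitely often in the future and some in the past. -/
def Recurrent {V : Type*} (v : ℤ → V) : Prop :=
  (∃ c, {n : ℤ | 0 < n ∧ v n = c}.Infinite) ∧ ∃ c, {n : ℤ | n < 0 ∧ v n = c}.Infinite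

/-- The distance `d(v,w) = exp(-min{|n| : v_n ≠ w_n})` on sequence spaces. -/
def dSigma {V : Type*} (v w : ℤ → V) : ℝ :=
  sSup {t : ℝ | ∃ n : ℤ, v n ≠ w n ∧ t = Real.exp (-|(n:ℝ)|)}

/-- Sup norm over a set. -/
def supNorm (h : ℝ → ℝ) (I : Set ℝ) : ℝ := sSup ((fun t => |h t|) '' I)

/-- Hölder constant over a set. -/
def holConst (γ : ℝ) (h : ℝ → ℝ) (I : Set ℝ) : ℝ :=
  sSup {r : ℝ | ∃ t ∈ I, ∃ s ∈ I, t ≠ s ∧ r = |h t - h s| / |t - s| ^ γ}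

/-- The set `NUE^#_χ`. -/
def NUEsharp (F : GoodMap) (χ ε : ℝ) : Set (ℤ → ℝ) :=
  {x | x ∈ NUEstar F χ ∧
    0 < Filter.limsup (fun n : ℕ => qeps F χ ε (fhatI (n:ℤ) x)) atTop ∧
    0 < Filter.limsup (fun n : ℕ => qeps F χ ε (fhatI (-(n:ℤ)) x)) atTop}

lemma fhat_eq (x : ℤ → ℝ) : fhat x = fhatI 1 x := rfl

lemma fhatI_fhatI (a b : ℤ) (x : ℤ → ℝ) : fhatI a (fhatI b x) = fhatI (a + b) x := by
  funext n
  simp only [fhatI]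
  congr 1
  ring

lemma fhatI_zero (x : ℤ → ℝ) : fhatI 0 x = x := by
  funext n
  simp [fhatI]

lemma dfhat_nat (f : ℝ → ℝ) (x : ℤ → ℝ) (n : ℕ) :
    dfhat f x (n : ℤ) = ∏ j ∈ Finset.range n, deriv f (x (j : ℤ)) := by
  simp [dfhat]

lemma dfhat_neg (f : ℝ → ℝ) (x : ℤ → ℝ) (n : ℕ) :
    dfhat f x (-(n : ℤ)) = (∏ j ∈ Finset.range n, deriv f (x (-(j : ℤ) - 1)))⁻¹ := by
  rcases Nat.eq_zero_or_pos n with h | h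
  · subst h
    simp [dfhat]
  · have : ¬ (0 ≤ -(n : ℤ)) := by omega
    rw [dfhat, if_neg this]
    simp

lemma dfhat_neg_succ (f : ℝ → ℝ) (x : ℤ → ℝ) (n : ℕ) :
    dfhat f x (-((n + 1 : ℕ) : ℤ)) =
      (deriv f (x (-1)))⁻¹ * dfhat f (fhatI (-1) x) (-(n : ℤ)) := by
  rw [dfhat_neg, dfhat_neg, Finset.prod_range_succ', mul_inv, mul_comm]
  congr 2
  · apply Finset.prod_congr rfl
    intro j _
    simp only [fhatI]
    congr 2
    push_cast
    ring

lemma inMhat_shift {f : ℝ → ℝ} {x : ℤ → ℝ} (h : inMhat f x) (k : ℤ) :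
    inMhat f (fhatI k x) := by
  refine ⟨fun n => h.1 _, fun n => ?_⟩
  have := h.2 (n + k)
  simp only [fhatI]
  rw [← this]
  congr 2
  ring

lemma inMhat_succ {f : ℝ → ℝ} {x : ℤ → ℝ} (h : inMhat f x) (n : ℤ) :
    f (x n) = x (n + 1) := by
  have := h.2 (n + 1)
  simpa using this

lemma NUE_deriv_ne {F : GoodMap} {χ : ℝ} {x : ℤ → ℝ} (h : x ∈ NUE F χ) (n : ℤ) :
    deriv F.f (x n) ≠ 0 := by
  intro h0
  refine h.2.1 n (Or.inl ⟨⟨h.1.1 n, fun hD => h.2.1 n (Or.inr hD)⟩, h0⟩)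

lemma log_dfhat_nat {F : GoodMap} {χ : ℝ} {x : ℤ → ℝ} (h : x ∈ NUE F χ) (n : ℕ) :
    Real.log |dfhat F.f x (n : ℤ)| = ∑ j ∈ Finset.range n, Real.log |deriv F.f (x (j : ℤ))| := by
  rw [dfhat_nat, Finset.abs_prod, Real.log_prod]
  intro j _
  exact abs_ne_zero.2 (NUE_deriv_ne h _)

lemma log_dfhat_neg {F : GoodMap} {χ : ℝ} {x : ℤ → ℝ} (h : x ∈ NUE F χ) (n : ℕ) :
    Real.log |dfhat F.f x (-(n : ℤ))| =
      -∑ j ∈ Finset.range n, Real.log |deriv F.f (x (-(j : ℤ) - 1))| := by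
  rw [dfhat_neg, abs_inv, Real.log_inv, Finset.abs_prod, Real.log_prod]
  intro j _
  exact abs_ne_zero.2 (NUE_deriv_ne h _)

/-- shifting averages forward -/
lemma avg_succ {s : ℕ → ℝ} {l : ℝ} (c : ℝ)
    (h : Tendsto (fun n : ℕ => s n / (n : ℝ)) atTop (𝓝 l)) :
    Tendsto (fun n : ℕ => (s (n + 1) + c) / (n : ℝ)) atTop (𝓝 l) := by
  have h1 := (tendsto_add_atTop_iff_nat 1).2 h
  have h2 : Tendsto (fun n : ℕ => (1 : ℝ) + 1 / (n : ℝ)) atTop (𝓝 (1 + 0)) :=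
    tendsto_const_nhds.add tendsto_one_div_atTop_nhds_zero_nat
  have h3 : Tendsto (fun n : ℕ => c * (1 / (n : ℝ))) atTop (𝓝 (c * 0)) :=
    tendsto_const_nhds.mul tendsto_one_div_atTop_nhds_zero_nat
  have h4 := (h1.mul h2).add h3
  simp only [add_zero, mul_one, mul_zero] at h4
  refine h4.congr' ?_
  filter_upwards [eventually_gt_atTop 0] with n hn
  have : (0 : ℝ) < n := by exact_mod_cast hn
  push_cast
  field_simp

/-- shifting averages backward -/
lemma avg_pred {s t : ℕ → ℝ} {l : ℝ} (c : ℝ) (hst : ∀ n, t (n + 1) = s n + c)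
    (h : Tendsto (fun n : ℕ => s n / (n : ℝ)) atTop (𝓝 l)) :
    Tendsto (fun n : ℕ => t n / (n : ℝ)) atTop (𝓝 l) := by
  rw [← tendsto_add_atTop_iff_nat 1]
  have h2 : Tendsto (fun n : ℕ => (n : ℝ) / ((n : ℝ) + 1)) atTop (𝓝 1) :=
    tendsto_natCast_div_add_atTop 1
  have h3 : Tendsto (fun n : ℕ => c * (1 / ((n : ℝ) + 1))) atTop (𝓝 (c * 0)) :=
    tendsto_const_nhds.mul tendsto_one_div_add_atTop_nhds_zero_nat
  have h4 := (h.mul h2).add h3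
  simp only [add_zero, mul_one, mul_zero] at h4
  refine h4.congr' ?_
  filter_upwards [eventually_gt_atTop 0] with n hn
  have : (0 : ℝ) < n := by exact_mod_cast hn
  rw [hst]
  push_cast
  field_simp

lemma NUE_iff {F : GoodMap} {χ : ℝ} {x : ℤ → ℝ} (hM : inMhat F.f x) (hS : ∀ n, x n ∉ F.S) :
    x ∈ NUE F χ ↔
    (∃ l > χ, Tendsto (fun n : ℕ => (∑ j ∈ Finset.range n, Real.log |deriv F.f (x (j : ℤ))|) / (n:ℝ))
        atTop (𝓝 l)) ∧
    (∃ l > χ, Tendsto (fun n : ℕ => (∑ j ∈ Finset.range n,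
        Real.log |deriv F.f (x (-(j : ℤ) - 1))|) / (n:ℝ)) atTop (𝓝 l)) := by
  have hne : ∀ n, deriv F.f (x n) ≠ 0 := by
    intro n h0
    exact hS n (Or.inl ⟨⟨hM.1 n, fun hD => hS n (Or.inr hD)⟩, h0⟩)
  have e1 : ∀ n : ℕ, Real.log |dfhat F.f x (n : ℤ)| / (n : ℝ) =
      (∑ j ∈ Finset.range n, Real.log |deriv F.f (x (j : ℤ))|) / (n:ℝ) := by
    intro n
    rw [dfhat_nat, Finset.abs_prod, Real.log_prod]
    intro j _
    exact abs_ne_zero.2 (hne _)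
  have e2 : ∀ n : ℕ, Real.log |dfhat F.f x (-(n : ℤ))| / (-(n : ℝ)) =
      (∑ j ∈ Finset.range n, Real.log |deriv F.f (x (-(j : ℤ) - 1))|) / (n:ℝ) := by
    intro n
    rw [dfhat_neg, abs_inv, Real.log_inv, Finset.abs_prod, Real.log_prod, neg_div_neg_eq]
    intro j _
    exact abs_ne_zero.2 (hne _)
  simp only [NUE, Set.mem_ofPred_eq, e1, e2]
  tauto

lemma NUE_shift_one {F : GoodMap} {χ : ℝ} {x : ℤ → ℝ} (h : x ∈ NUE F χ) :
    fhatI 1 x ∈ NUE F χ := by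
  rw [NUE_iff (inMhat_shift h.1 1) (fun n => h.2.1 _)]
  obtain ⟨⟨l, hl, h1⟩, ⟨m, hm, h2⟩⟩ := (NUE_iff h.1 h.2.1).1 h
  refine ⟨⟨l, hl, ?_⟩, ⟨m, hm, ?_⟩⟩
  · refine (avg_succ (-Real.log |deriv F.f (x 0)|) h1).congr ?_
    intro n
    rw [Finset.sum_range_succ']
    simp [fhatI]
  · refine avg_pred (Real.log |deriv F.f (x 0)|) ?_ h2
    intro n
    rw [Finset.sum_range_succ']
    simp only [fhatI]
    congr 1
    apply Finset.sum_congr rfl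
    intro j _
    push_cast
    congr 4
    ring

lemma NUE_shift_neg_one {F : GoodMap} {χ : ℝ} {x : ℤ → ℝ} (h : x ∈ NUE F χ) :
    fhatI (-1) x ∈ NUE F χ := by
  rw [NUE_iff (inMhat_shift h.1 (-1)) (fun n => h.2.1 _)]
  obtain ⟨⟨l, hl, h1⟩, ⟨m, hm, h2⟩⟩ := (NUE_iff h.1 h.2.1).1 h
  refine ⟨⟨l, hl, ?_⟩, ⟨m, hm, ?_⟩⟩
  · refine avg_pred (Real.log |deriv F.f (x (-1))|) ?_ h1
    intro n
    rw [Finset.sum_range_succ']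
    simp only [fhatI]
    congr 1
    apply Finset.sum_congr rfl
    intro j _
    push_cast
    congr 4
    ring
  · refine (avg_succ (-Real.log |deriv F.f (x (-1))|) h2).congr ?_
    intro n
    rw [Finset.sum_range_succ']
    simp only [fhatI]
    norm_num
    congr 1
    apply Finset.sum_congr rfl
    intro j _
    congr 4
    ring

lemma NUE_shift {F : GoodMap} {χ : ℝ} {x : ℤ → ℝ} (h : x ∈ NUE F χ) (k : ℤ) :
    fhatI k x ∈ NUE F χ := by
  induction k using Int.induction_on with
  | zero => rwa [fhatI_zero]
  | succ i ih =>
    have := NUE_shift_one ih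
    rwa [fhatI_fhatI, add_comm] at this
  | pred i ih =>
    have := NUE_shift_neg_one ih
    rwa [fhatI_fhatI, add_comm, ← sub_eq_add_neg] at this

lemma uPes_summable {F : GoodMap} {χ : ℝ} {x : ℤ → ℝ} (h : x ∈ NUE F χ) :
    Summable (fun n : ℕ => Real.exp (2 * (n:ℝ) * χ) * (dfhat F.f x (-(n:ℤ))) ^ 2) := by
  obtain ⟨_, ⟨m, hm, h2⟩⟩ := (NUE_iff h.1 h.2.1).1 h
  set κ := (m - χ) / 2 with hκ
  have hκ0 : 0 < κ := by rw [hκ]; linarith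
  have hgeo : Summable (fun n : ℕ => (Real.exp (-2 * κ)) ^ n) :=
    summable_geometric_of_lt_one (Real.exp_pos _).le (by rw [Real.exp_lt_one_iff]; linarith)
  refine hgeo.of_norm_bounded_eventually_nat ?_
  have hev := h2.eventually (lt_mem_nhds (show χ + κ < m by rw [hκ]; linarith))
  filter_upwards [hev, eventually_gt_atTop 0] with n hn hn0
  have hn0' : (0 : ℝ) < n := by exact_mod_cast hn0
  rw [lt_div_iff₀ hn0'] at hn
  have hl := log_dfhat_neg h n
  have hne : dfhat F.f x (-(n:ℤ)) ≠ 0 := by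
    rw [dfhat_neg]
    exact inv_ne_zero (Finset.prod_ne_zero_iff.2 fun j _ => NUE_deriv_ne h _)
  have hd : |dfhat F.f x (-(n:ℤ))| ≤ Real.exp (-((χ + κ) * n)) := by
    rw [← Real.log_le_iff_le_exp (abs_pos.2 hne), hl]
    linarith
  rw [Real.norm_of_nonneg (by positivity), ← sq_abs, ← Real.exp_nat_mul]
  calc Real.exp (2 * (n:ℝ) * χ) * |dfhat F.f x (-(n:ℤ))| ^ 2
      ≤ Real.exp (2 * (n:ℝ) * χ) * (Real.exp (-((χ + κ) * n))) ^ 2 := by gcongr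
    _ = Real.exp (n * (-2 * κ)) := by
        rw [← Real.exp_nat_mul, ← Real.exp_add]
        congr 1
        push_cast
        ring

lemma uPes_sq {F : GoodMap} {χ : ℝ} {x : ℤ → ℝ} (h : x ∈ NUE F χ) :
    uPes F.f χ x ^ 2 = 1 + Real.exp χ ^ 2 * (deriv F.f (x (-1)))⁻¹ ^ 2 *
      uPes F.f χ (fhatI (-1) x) ^ 2 := by
  rw [uPes, uPes, Real.sq_sqrt (tsum_nonneg fun n => by positivity),
    Real.sq_sqrt (tsum_nonneg fun n => by positivity), (uPes_summable h).tsum_eq_zero_add,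
    ← tsum_mul_left]
  congr 1
  · simp [dfhat]
  · congr 1
    funext n
    rw [dfhat_neg_succ]
    have : Real.exp (2 * ((n + 1 : ℕ) : ℝ) * χ) = Real.exp χ ^ 2 * Real.exp (2 * (n : ℝ) * χ) := by
      rw [← Real.exp_nat_mul, ← Real.exp_add]
      congr 1
      push_cast
      ring
    rw [this]
    ring

lemma uPes_nonneg (f : ℝ → ℝ) (χ : ℝ) (x : ℤ → ℝ) : 0 ≤ uPes f χ x := Real.sqrt_nonneg _

lemma one_le_uPes {F : GoodMap} {χ : ℝ} {x : ℤ → ℝ} (h : x ∈ NUE F χ) :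
    1 ≤ uPes F.f χ x := by
  have h1 := uPes_sq h
  have h2 : (1 : ℝ) ≤ uPes F.f χ x ^ 2 := by
    rw [h1]
    have : 0 ≤ Real.exp χ ^ 2 * (deriv F.f (x (-1)))⁻¹ ^ 2 *
      uPes F.f χ (fhatI (-1) x) ^ 2 := by positivity
    linarith
  nlinarith [uPes_nonneg F.f χ x]

lemma uPes_contr {F : GoodMap} {χ : ℝ} {x : ℤ → ℝ} (h : x ∈ NUE F χ) :
    |(deriv F.f (x (-1)))⁻¹| * uPes F.f χ (fhatI (-1) x) ≤ Real.exp (-χ) * uPes F.f χ x := by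
  have h1 := uPes_sq h
  have h3 : (Real.exp χ * (|(deriv F.f (x (-1)))⁻¹| * uPes F.f χ (fhatI (-1) x))) ^ 2 ≤
      uPes F.f χ x ^ 2 := by
    rw [h1, mul_pow, mul_pow, sq_abs]
    linarith
  have h4 := le_of_sq_le_sq h3 (uPes_nonneg F.f χ x)
  rw [Real.exp_neg, inv_mul_eq_div, le_div_iff₀ (Real.exp_pos χ)]
  linarith

lemma uPes_le {F : GoodMap} {χ : ℝ} {x : ℤ → ℝ} (h : x ∈ NUE F χ) :
    uPes F.f χ x ≤ 1 + Real.exp χ * |(deriv F.f (x (-1)))⁻¹| * uPes F.f χ (fhatI (-1) x) := by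
  have h1 := uPes_sq h
  have h5 : 0 ≤ Real.exp χ * |(deriv F.f (x (-1)))⁻¹| * uPes F.f χ (fhatI (-1) x) :=
    mul_nonneg (by positivity) (uPes_nonneg _ _ _)
  refine le_of_sq_le_sq ?_ (by linarith)
  rw [h1, add_sq, mul_pow, mul_pow, sq_abs]
  nlinarith


lemma dS_nonneg (F : GoodMap) (x : ℝ) : 0 ≤ F.dS x := Metric.infDist_nonneg

lemma r_pos {F : GoodMap} (hA : F.SatA) {x : ℝ} (hx : x ∈ Mset) (h1 : x ∉ F.S)
    (h2 : F.f x ∉ F.S) : 0 < F.r x := by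
  have h := (hA x hx h1 h2).1.1
  refine lt_of_le_of_lt ?_ h
  exact le_min (Real.rpow_nonneg (dS_nonneg _ _) _) (Real.rpow_nonneg (dS_nonneg _ _) _)

lemma NUE_f_not_mem {F : GoodMap} {χ : ℝ} {x : ℤ → ℝ} (h : x ∈ NUE F χ) (n : ℤ) :
    F.f (x n) ∉ F.S := by
  rw [inMhat_succ h.1]
  exact h.2.1 _

lemma dS_pos {F : GoodMap} (hA : F.SatA) {χ : ℝ} {x : ℤ → ℝ} (h : x ∈ NUE F χ) (n : ℤ) :
    0 < F.dS (x n) := by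
  rcases (dS_nonneg F (x n)).lt_or_eq with h0 | h0
  · exact h0
  · exfalso
    have hr := r_pos hA (h.1.1 n) (h.2.1 n) (NUE_f_not_mem h n)
    have h2 := ((hA _ (h.1.1 n) (h.2.1 n) (NUE_f_not_mem h n)).2.2.1.1 (x n)
      (Metric.mem_ball_self (by linarith))).2
    rw [← h0, Real.zero_rpow (by have := F.ha; linarith)] at h2
    exact NUE_deriv_ne h n (abs_nonpos_iff.1 h2)

lemma S_subset (F : GoodMap) : F.S ⊆ Mset := by
  rintro x (hx | hx)
  · exact hx.1.1
  · exact F.hD hx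

lemma Mset_dist {x y : ℝ} (hx : x ∈ Mset) (hy : y ∈ Mset) : |x - y| ≤ 1 / 2 := by
  obtain ⟨h1, h2⟩ := hx
  obtain ⟨h3, h4⟩ := hy
  rw [abs_le]
  constructor <;> linarith

lemma dS_le (F : GoodMap) {x : ℝ} (hx : x ∈ Mset) : F.dS x ≤ 1 / 2 := by
  rcases F.S.eq_empty_or_nonempty with h | ⟨s, hs⟩
  · simp only [GoodMap.dS, h, Metric.infDist_empty]
    norm_num
  · exact (Metric.infDist_le_dist_of_mem hs).trans (Mset_dist hx (S_subset F hs))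

lemma dS_lip (F : GoodMap) (x y : ℝ) : F.dS x - |x - y| ≤ F.dS y := by
  have : F.dS x ≤ F.dS y + dist x y := Metric.infDist_le_infDist_add_dist
  rw [Real.dist_eq] at this
  linarith

lemma rho_pos {F : GoodMap} (hA : F.SatA) {χ : ℝ} {x : ℤ → ℝ} (h : x ∈ NUE F χ) :
    0 < rho F x :=
  lt_min (dS_pos hA h _) (lt_min (dS_pos hA h _) (dS_pos hA h _))

lemma rho_le {F : GoodMap} {χ : ℝ} {x : ℤ → ℝ} (h : x ∈ NUE F χ) :
    rho F x ≤ 1 / 2 := (min_le_left _ _).trans (dS_le F (h.1.1 _))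

lemma Qtilde_pos {F : GoodMap} (hA : F.SatA) {χ ε : ℝ} (hε : 0 < ε) {x : ℤ → ℝ}
    (h : x ∈ NUE F χ) : 0 < Qtilde F χ ε x := by
  have h1 := one_le_uPes h
  have h2 := one_le_uPes (NUE_shift h (-1))
  have h3 := rho_pos hA h
  rw [Qtilde]
  refine mul_pos (Real.rpow_pos_of_pos hε _) (lt_min (Real.rpow_pos_of_pos (by linarith) _)
    (mul_pos (Real.rpow_pos_of_pos (by linarith) _) (Real.rpow_pos_of_pos h3 _)))

lemma Qeps_spec {F : GoodMap} (hA : F.SatA) {χ ε : ℝ} (hε : 0 < ε) {x : ℤ → ℝ}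
    (h : x ∈ NUE F χ) :
    (∃ k : ℕ, Qeps F χ ε x = Real.exp (-(ε * k) / 3)) ∧ Qeps F χ ε x ≤ Qtilde F χ ε x := by
  classical
  have hT := Qtilde_pos hA hε h
  have hex : ∃ k : ℕ, Real.exp (-(ε * k) / 3) ≤ Qtilde F χ ε x := by
    have : Tendsto (fun k : ℕ => Real.exp (-(ε * k) / 3)) atTop (𝓝 0) := by
      refine Real.tendsto_exp_atBot.comp ?_
      have h1 : Tendsto (fun k : ℕ => (ε / 3) * (k : ℝ)) atTop atTop :=
        tendsto_natCast_atTop_atTop.const_mul_atTop (by positivity)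
      refine (tendsto_neg_atTop_atBot.comp h1).congr ?_
      intro k
      simp only [Function.comp]
      ring
    obtain ⟨k, hk⟩ := (this.eventually (gt_mem_nhds hT)).exists
    exact ⟨k, hk.le⟩
  have hg : IsGreatest {q | q ∈ Ieps ε ∧ q ≤ Qtilde F χ ε x}
      (Real.exp (-(ε * (Nat.find hex : ℕ)) / 3)) := by
    refine ⟨⟨⟨_, rfl⟩, Nat.find_spec hex⟩, ?_⟩
    rintro q ⟨⟨n, rfl⟩, hq⟩
    have : Nat.find hex ≤ n := Nat.find_min' hex hq
    have h' : (Nat.find hex : ℝ) ≤ n := by exact_mod_cast this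
    apply Real.exp_le_exp.2
    have := mul_le_mul_of_nonneg_left h' hε.le
    linarith
  have he : Qeps F χ ε x = Real.exp (-(ε * (Nat.find hex : ℕ)) / 3) := hg.csSup_eq
  refine ⟨⟨_, he⟩, ?_⟩
  rw [he]
  exact Nat.find_spec hex

lemma Qeps_pos {F : GoodMap} (hA : F.SatA) {χ ε : ℝ} (hε : 0 < ε) {x : ℤ → ℝ}
    (h : x ∈ NUE F χ) : 0 < Qeps F χ ε x := by
  obtain ⟨⟨k, hk⟩, _⟩ := Qeps_spec hA hε h
  rw [hk]
  exact Real.exp_pos _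

lemma rpow_neg_le_one {u s : ℝ} (hu : 1 ≤ u) (hs : 0 ≤ s) : u ^ (-s) ≤ 1 :=
  Real.rpow_le_one_of_one_le_of_nonpos hu (by linarith)

lemma rpow_neg_le_inv {u s : ℝ} (hu : 1 ≤ u) (hs : 1 ≤ s) : u ^ (-s) ≤ u⁻¹ := by
  rw [← Real.rpow_neg_one]
  exact Real.rpow_le_rpow_of_exponent_le hu (by linarith)

lemma one_le_div_beta (F : GoodMap) {c : ℝ} (hc : 1 ≤ c) : 1 ≤ c / F.β := by
  have h1 := F.hβ0
  have h2 := F.hβ1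
  rw [le_div_iff₀ h1]
  linarith

lemma eps_rpow_le (F : GoodMap) {ε : ℝ} (h0 : 0 < ε) (h1 : ε < 1) : ε ^ (3 / F.β) ≤ ε := by
  conv_rhs => rw [← Real.rpow_one ε]
  exact Real.rpow_le_rpow_of_exponent_ge h0 h1.le (one_le_div_beta F (by norm_num))

/-- `Q ≤ ε`, `Q u ≤ ε`. -/
lemma Qeps_mul_u {F : GoodMap} (hA : F.SatA) {χ ε : ℝ} (hε : 0 < ε) (h1 : ε < 1) {x : ℤ → ℝ}
    (h : x ∈ NUE F χ) : Qeps F χ ε x * uPes F.f χ x ≤ ε := by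
  have hu := one_le_uPes h
  have hQ : Qeps F χ ε x ≤ ε * (uPes F.f χ x)⁻¹ := by
    refine (Qeps_spec hA hε h).2.trans ?_
    rw [Qtilde]
    refine mul_le_mul (eps_rpow_le F hε h1) ((min_le_left _ _).trans
      (rpow_neg_le_inv hu (one_le_div_beta F (by norm_num)))) ?_ hε.le
    have h3 := rho_pos hA h
    have h2 := one_le_uPes (NUE_shift h (-1))
    exact le_min (by positivity) (by positivity)
  rwa [← div_eq_mul_inv, le_div_iff₀ (by linarith)] at hQ

lemma Qeps_le_eps {F : GoodMap} (hA : F.SatA) {χ ε : ℝ} (hε : 0 < ε) (h1 : ε < 1) {x : ℤ → ℝ}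
    (h : x ∈ NUE F χ) : Qeps F χ ε x ≤ ε := by
  have hu := one_le_uPes h
  have := Qeps_mul_u hA hε h1 h
  have := Qeps_pos hA hε h
  nlinarith

lemma Qeps_rpow_mul {F : GoodMap} (hA : F.SatA) {χ ε : ℝ} (hε : 0 < ε) (h1 : ε < 1) {x : ℤ → ℝ}
    (h : x ∈ NUE F χ) : Qeps F χ ε x ^ F.β * uPes F.f χ (fhatI (-1) x) ≤ ε := by
  have hβ := F.hβ0
  have hu := one_le_uPes (NUE_shift h (-1))
  set v := uPes F.f χ (fhatI (-1) x)
  have hv : 0 < v := by linarith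
  have h3 := rho_pos hA h
  have h4 := rho_le h
  have ha := F.ha
  have hQ : Qeps F χ ε x ≤ ε ^ (3 / F.β) * v ^ (-(12 / F.β)) := by
    refine (Qeps_spec hA hε h).2.trans ?_
    rw [Qtilde]
    refine mul_le_mul_of_nonneg_left ((min_le_right _ _).trans ?_) (by positivity)
    refine mul_le_of_le_one_right (by positivity) ?_
    exact Real.rpow_le_one h3.le (by linarith) (by positivity)
  have h5 : Qeps F χ ε x ^ F.β ≤ ε ^ (3:ℝ) * v ^ (-12 : ℝ) := by
    refine (Real.rpow_le_rpow (Qeps_pos hA hε h).le hQ hβ.le).trans (le_of_eq ?_)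
    rw [Real.mul_rpow (by positivity) (by positivity), ← Real.rpow_mul hε.le,
      ← Real.rpow_mul hv.le]
    congr 2
    · field_simp
    · field_simp
  have h6 : v ^ (-12 : ℝ) ≤ v⁻¹ := rpow_neg_le_inv hu (by norm_num)
  have h7 : ε ^ (3 : ℝ) ≤ ε := by
    conv_rhs => rw [← Real.rpow_one ε]
    exact Real.rpow_le_rpow_of_exponent_ge hε h1.le (by norm_num)
  calc Qeps F χ ε x ^ F.β * v ≤ (ε * v⁻¹) * v := by
        refine mul_le_mul_of_nonneg_right (h5.trans ?_) hv.le
        exact mul_le_mul h7 h6 (by positivity) hε.le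
    _ = ε := by field_simp

lemma Qeps_le_rho {F : GoodMap} (hA : F.SatA) {χ ε : ℝ} (hε : 0 < ε) (h1 : ε < 1) {x : ℤ → ℝ}
    (h : x ∈ NUE F χ) : Qeps F χ ε x ≤ ε * (rho F x / 2) ^ F.a := by
  have hβ := F.hβ0
  have hu := one_le_uPes (NUE_shift h (-1))
  have h3 := rho_pos hA h
  have h4 := rho_le h
  have ha := F.ha
  refine (Qeps_spec hA hε h).2.trans ?_
  rw [Qtilde]
  refine mul_le_mul (eps_rpow_le F hε h1) ((min_le_right _ _).trans ?_) ?_ hε.le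
  · refine (mul_le_of_le_one_left (by positivity) (rpow_neg_le_one hu (by positivity))).trans ?_
    have h5 : rho F x ^ (72 * F.a / F.β) ≤ rho F x ^ (2 * F.a) := by
      refine Real.rpow_le_rpow_of_exponent_ge h3 (by linarith) ?_
      rw [le_div_iff₀ hβ]
      have := F.hβ1
      nlinarith
    refine h5.trans ?_
    rw [Real.rpow_mul h3.le]
    refine Real.rpow_le_rpow (by positivity) ?_ (by linarith)
    norm_num
    nlinarith
  · exact le_min (Real.rpow_nonneg (uPes_nonneg _ _ _) _) (by positivity)

lemma rho_rpow_le {F : GoodMap} (hA : F.SatA) {χ : ℝ} {x : ℤ → ℝ}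
    (h : x ∈ NUE F χ) : (rho F x / 2) ^ F.a ≤ rho F x / 2 := by
  have h3 := rho_pos hA h
  have h4 := rho_le h
  have ha := F.ha
  conv_rhs => rw [← Real.rpow_one (rho F x / 2)]
  exact Real.rpow_le_rpow_of_exponent_ge (by positivity) (by linarith) ha.le

/-- smallness conditions on `ε`. -/
structure Small (F : GoodMap) (χ ε : ℝ) : Prop where
  pos : 0 < ε
  lt_one : ε < 1 / 4
  contr : (1 + ε) * (Real.exp (-χ) + F.K * ε) < Real.exp (-χ / 2)
  into : ε + Real.exp ε * Real.exp (-χ / 2) < 1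
  exp8 : Real.exp ε ^ 8 < 2

lemma exists_small (F : GoodMap) {χ : ℝ} (hχ : 0 < χ) :
    ∃ ε₀ > 0, ∀ ε : ℝ, 0 < ε → ε < ε₀ → Small F χ ε := by
  have h1 : ∀ᶠ ε in 𝓝 (0 : ℝ), ε < 1 / 4 := gt_mem_nhds (by norm_num)
  have h2 : ∀ᶠ ε in 𝓝 (0 : ℝ), (1 + ε) * (Real.exp (-χ) + F.K * ε) < Real.exp (-χ / 2) := by
    have hc : Continuous fun ε : ℝ => (1 + ε) * (Real.exp (-χ) + F.K * ε) := by fun_prop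
    refine hc.continuousAt.eventually (gt_mem_nhds ?_)
    simp only [add_zero, one_mul, mul_zero]
    exact Real.exp_lt_exp.2 (by linarith)
  have h3 : ∀ᶠ ε in 𝓝 (0 : ℝ), ε + Real.exp ε * Real.exp (-χ / 2) < 1 := by
    have hc : Continuous fun ε : ℝ => ε + Real.exp ε * Real.exp (-χ / 2) := by fun_prop
    refine hc.continuousAt.eventually (gt_mem_nhds ?_)
    simp only [Real.exp_zero, one_mul, zero_add]
    rw [Real.exp_lt_one_iff]
    linarith
  have h4 : ∀ᶠ ε in 𝓝 (0 : ℝ), Real.exp ε ^ 8 < 2 := by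
    have hc : Continuous fun ε : ℝ => Real.exp ε ^ 8 := by fun_prop
    refine hc.continuousAt.eventually (gt_mem_nhds ?_)
    norm_num
  obtain ⟨ε₀, h0, h⟩ := Metric.eventually_nhds_iff.1 (h1.and (h2.and (h3.and h4)))
  refine ⟨ε₀, h0, fun ε hε hlt => ?_⟩
  have := h (y := ε) (by rw [Real.dist_eq, sub_zero, abs_of_pos hε]; exact hlt)
  exact ⟨hε, this.1, this.2.1, this.2.2.1, this.2.2.2⟩

lemma deltaEps_pos (ε : ℝ) : 0 < deltaEps ε := Real.exp_pos _

lemma deltaEps_le {ε : ℝ} (h0 : 0 < ε) (h1 : ε < 1) : deltaEps ε ≤ 1 := by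
  rw [deltaEps, Real.exp_le_one_iff]
  have h2 : 0 ≤ Real.log (1 / ε) / ε := by
    refine div_nonneg (Real.log_nonneg ?_) h0.le
    rw [le_div_iff₀ h0]
    linarith
  have h3 : (0 : ℤ) ≤ ⌊Real.log (1 / ε) / ε⌋ := Int.floor_nonneg.2 h2
  have h4 : (0 : ℝ) ≤ ((⌊Real.log (1 / ε) / ε⌋ + 1 : ℤ) : ℝ) := by
    exact_mod_cast (by omega)
  have := mul_nonneg h0.le h4
  linarith


/-- the domain of a Pesin chart of size `p` -/
def Dom (F : GoodMap) (χ : ℝ) (x : ℤ → ℝ) (p : ℝ) : Set ℝ :=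
  {z | |z - x 0| * uPes F.f χ x ≤ p}

lemma Dom_mono {F : GoodMap} {χ : ℝ} {x : ℤ → ℝ} {p q : ℝ} (h : p ≤ q) :
    Dom F χ x p ⊆ Dom F χ x q := fun _ hz => le_trans hz h

lemma Dom_eq {F : GoodMap} {χ : ℝ} {x : ℤ → ℝ} (h : x ∈ NUE F χ) (p : ℝ) :
    Dom F χ x p = Metric.closedBall (x 0) (p / uPes F.f χ x) := by
  have hu := one_le_uPes h
  ext z
  rw [Metric.mem_closedBall, Real.dist_eq, le_div_iff₀ (by linarith)]
  rfl

lemma center_mem_Dom {F : GoodMap} {χ : ℝ} {x : ℤ → ℝ} {p : ℝ} (hp : 0 ≤ p) :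
    x 0 ∈ Dom F χ x p := by
  simp [Dom, hp]

lemma chartRange_eq {F : GoodMap} {χ : ℝ} {c : Chart} (h : c.x ∈ NUE F χ) :
    chartRange F χ c = Dom F χ c.x c.p := by
  have hu := one_le_uPes h
  have hu0 : 0 < uPes F.f χ c.x := by linarith
  ext z
  simp only [chartRange, Dom, Set.mem_image, Set.mem_Icc, Psi]
  constructor
  · rintro ⟨t, ht, rfl⟩
    change |t / uPes F.f χ c.x + c.x 0 - c.x 0| * uPes F.f χ c.x ≤ c.p
    rw [add_sub_cancel_right, abs_div, abs_of_pos hu0, div_mul_cancel₀ _ hu0.ne']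
    exact abs_le.2 ht
  · intro hz
    change |z - c.x 0| * uPes F.f χ c.x ≤ c.p at hz
    refine ⟨(z - c.x 0) * uPes F.f χ c.x, ?_, ?_⟩
    · rw [← abs_le, abs_mul, abs_of_pos hu0]
      exact hz
    · field_simp
      ring

lemma satA_at {F : GoodMap} (hA : F.SatA) {χ : ℝ} {x : ℤ → ℝ} (h : x ∈ NUE F χ) :
    (min (F.dS (x (-1)) ^ F.a) (F.dS (x 0) ^ F.a) < F.r (x (-1)) ∧ F.r (x (-1)) < 1) ∧
    (Set.InjOn F.f (Metric.ball (x (-1)) (2 * F.r (x (-1)))) ∧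
      (∀ y ∈ Metric.ball (x (-1)) (2 * F.r (x (-1))), DifferentiableAt ℝ F.f y) ∧
      F.g (x (-1)) (x 0) = x (-1) ∧
      (∀ z ∈ Metric.ball (x 0) (2 * F.r (x (-1))), F.f (F.g (x (-1)) z) = z) ∧
      Set.InjOn (F.g (x (-1))) (Metric.ball (x 0) (2 * F.r (x (-1)))) ∧
      (∀ z ∈ Metric.ball (x 0) (2 * F.r (x (-1))), DifferentiableAt ℝ (F.g (x (-1))) z)) ∧
    (∀ y ∈ Metric.ball (x 0) (2 * F.r (x (-1))), ∀ z ∈ Metric.ball (x 0) (2 * F.r (x (-1))),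
        |deriv (F.g (x (-1))) y - deriv (F.g (x (-1))) z| ≤ F.K * |y - z| ^ F.β) := by
  have e : F.f (x (-1)) = x 0 := by
    rw [inMhat_succ h.1]
    norm_num
  have := hA (x (-1)) (h.1.1 _) (h.2.1 _) (NUE_f_not_mem h _)
  rw [e] at this
  exact ⟨this.1, this.2.1, this.2.2.2.2⟩

lemma r_pos' {F : GoodMap} (hA : F.SatA) {χ : ℝ} {x : ℤ → ℝ} (h : x ∈ NUE F χ) :
    0 < F.r (x (-1)) := r_pos hA (h.1.1 _) (h.2.1 _) (NUE_f_not_mem h _)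

/-- lower bound on `r` -/
lemma le_r {F : GoodMap} (hA : F.SatA) {χ : ℝ} {x : ℤ → ℝ} (h : x ∈ NUE F χ) {s : ℝ}
    (hs : 0 ≤ s) (h1 : s ≤ F.dS (x (-1))) (h2 : s ≤ F.dS (x 0)) : s ^ F.a < F.r (x (-1)) := by
  have ha := F.ha
  refine lt_of_le_of_lt (le_min ?_ ?_) (satA_at hA h).1.1
  · exact Real.rpow_le_rpow hs h1 (by linarith)
  · exact Real.rpow_le_rpow hs h2 (by linarith)

lemma Qeps_lt_r {F : GoodMap} (hA : F.SatA) {χ ε : ℝ} (hε : 0 < ε) (h1 : ε < 1) {x : ℤ → ℝ}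
    (h : x ∈ NUE F χ) : Qeps F χ ε x < F.r (x (-1)) := by
  have h3 := rho_pos hA h
  have h5 : (rho F x / 2) ^ F.a < F.r (x (-1)) := by
    have e1 : rho F x ≤ F.dS (x (-1)) := min_le_left _ _
    have e2 : rho F x ≤ F.dS (x 0) := (min_le_right _ _).trans (min_le_left _ _)
    refine le_r hA h (by linarith) (by linarith) (by linarith)
  have h6 := Qeps_le_rho hA hε h1 h
  have h7 : 0 < (rho F x / 2) ^ F.a := Real.rpow_pos_of_pos (by linarith) _
  nlinarith

lemma Dom_subset_ball {F : GoodMap} (hA : F.SatA) {χ ε : ℝ} (hε : 0 < ε) (h1 : ε < 1)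
    {x : ℤ → ℝ} (h : x ∈ NUE F χ) :
    Dom F χ x (Qeps F χ ε x) ⊆ Metric.ball (x 0) (2 * F.r (x (-1))) := by
  intro z hz
  have hu := one_le_uPes h
  have h2 := Qeps_lt_r hA hε h1 h
  have h3 := r_pos' hA h
  rw [Metric.mem_ball, Real.dist_eq]
  have hz' : |z - x 0| * uPes F.f χ x ≤ Qeps F χ ε x := hz
  nlinarith [abs_nonneg (z - x 0)]

lemma deriv_g {F : GoodMap} (hA : F.SatA) {χ : ℝ} {x : ℤ → ℝ} (h : x ∈ NUE F χ) :
    deriv (F.g (x (-1))) (x 0) = (deriv F.f (x (-1)))⁻¹ := by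
  obtain ⟨_, ⟨_, hdf, hg0, hfg, _, hdg⟩, _⟩ := satA_at hA h
  have hr := r_pos' hA h
  have hmem : x 0 ∈ Metric.ball (x 0) (2 * F.r (x (-1))) := Metric.mem_ball_self (by linarith)
  have hmem' : x (-1) ∈ Metric.ball (x (-1)) (2 * F.r (x (-1))) :=
    Metric.mem_ball_self (by linarith)
  have h1 : HasDerivAt F.f (deriv F.f (x (-1))) (F.g (x (-1)) (x 0)) := by
    rw [hg0]
    exact (hdf _ hmem').hasDerivAt
  have h2 := h1.comp (x 0) (hdg _ hmem).hasDerivAt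
  have h3 : HasDerivAt (F.f ∘ F.g (x (-1))) 1 (x 0) := by
    refine (hasDerivAt_id (x 0)).congr_of_eventuallyEq ?_
    filter_upwards [Metric.ball_mem_nhds (x 0) (show 0 < 2 * F.r (x (-1)) by linarith)] with z hz
    exact hfg z hz
  have h4 := h2.unique h3
  exact eq_inv_of_mul_eq_one_right h4

/-- contraction of the inverse branch along a true orbit -/
lemma g_contr {F : GoodMap} (hA : F.SatA) {χ ε : ℝ} (hε : 0 < ε) (h1 : ε < 1)
    {x : ℤ → ℝ} (h : x ∈ NUE F χ) {z z' : ℝ} (hz : z ∈ Dom F χ x (Qeps F χ ε x))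
    (hz' : z' ∈ Dom F χ x (Qeps F χ ε x)) :
    |F.g (x (-1)) z - F.g (x (-1)) z'| * uPes F.f χ (fhatI (-1) x) ≤
      (Real.exp (-χ) + F.K * ε) * (|z - z'| * uPes F.f χ x) := by
  have hu := one_le_uPes h
  have hv := one_le_uPes (NUE_shift h (-1))
  have hsub := Dom_subset_ball hA hε h1 h
  have hQ := Qeps_pos hA hε h
  have hβ := F.hβ0
  have hK := F.hK
  obtain ⟨_, ⟨_, _, _, _, _, hdg⟩, hH⟩ := satA_at hA h
  set B := |(deriv F.f (x (-1)))⁻¹| + F.K * Qeps F χ ε x ^ F.β with hB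
  have hbound : ∀ ζ ∈ Dom F χ x (Qeps F χ ε x), ‖deriv (F.g (x (-1))) ζ‖ ≤ B := by
    intro ζ hζ
    have e1 := hH ζ (hsub hζ) (x 0) (hsub (center_mem_Dom hQ.le))
    rw [deriv_g hA h] at e1
    have e2 : |ζ - x 0| ≤ Qeps F χ ε x := by
      have : |ζ - x 0| * uPes F.f χ x ≤ Qeps F χ ε x := hζ
      nlinarith [abs_nonneg (ζ - x 0)]
    have e3 : |ζ - x 0| ^ F.β ≤ Qeps F χ ε x ^ F.β :=
      Real.rpow_le_rpow (abs_nonneg _) e2 hβ.le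
    have e4 : |deriv (F.g (x (-1))) ζ| ≤ |(deriv F.f (x (-1)))⁻¹| +
        |deriv (F.g (x (-1))) ζ - (deriv F.f (x (-1)))⁻¹| := by
      have := abs_add_le (deriv F.f (x (-1)))⁻¹
        (deriv (F.g (x (-1))) ζ - (deriv F.f (x (-1)))⁻¹)
      rwa [add_sub_cancel] at this
    rw [Real.norm_eq_abs, hB]
    have := mul_le_mul_of_nonneg_left e3 (show 0 ≤ F.K by linarith)
    linarith
  have hconv : Convex ℝ (Dom F χ x (Qeps F χ ε x)) := by
    rw [Dom_eq h]
    exact convex_closedBall _ _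
  have hmv := hconv.norm_image_sub_le_of_norm_deriv_le
    (fun ζ hζ => hdg ζ (hsub hζ)) hbound hz' hz
  rw [Real.norm_eq_abs, Real.norm_eq_abs] at hmv
  have hc := uPes_contr h
  have hq := Qeps_rpow_mul hA hε h1 h
  have hBv : B * uPes F.f χ (fhatI (-1) x) ≤ (Real.exp (-χ) + F.K * ε) * uPes F.f χ x := by
    rw [hB, add_mul, add_mul]
    refine add_le_add hc ?_
    rw [mul_assoc]
    have := mul_le_mul_of_nonneg_left hq (show 0 ≤ F.K by linarith)
    have h5 : 0 ≤ F.K * ε := by positivity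
    nlinarith
  calc |F.g (x (-1)) z - F.g (x (-1)) z'| * uPes F.f χ (fhatI (-1) x)
      ≤ (B * |z - z'|) * uPes F.f χ (fhatI (-1) x) :=
        mul_le_mul_of_nonneg_right hmv (by linarith)
    _ = (B * uPes F.f χ (fhatI (-1) x)) * |z - z'| := by ring
    _ ≤ ((Real.exp (-χ) + F.K * ε) * uPes F.f χ x) * |z - z'| :=
        mul_le_mul_of_nonneg_right hBv (abs_nonneg _)
    _ = _ := by ring

lemma Small.contr' {F : GoodMap} {χ ε : ℝ} (hs : Small F χ ε) :
    Real.exp (-χ) + F.K * ε ≤ Real.exp (-χ / 2) := by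
  have h1 := hs.contr
  have h2 := hs.pos
  have h3 := F.hK
  have h4 : 0 ≤ Real.exp (-χ) + F.K * ε := by positivity
  nlinarith

set_option maxHeartbeats 2000000 in
/-- All facts about one edge. -/
lemma edge_facts {F : GoodMap} (hA : F.SatA) {χ ε : ℝ} (hs : Small F χ ε) {v w : Chart}
    (he : Edge F χ ε v w) :
    (∀ z ∈ Dom F χ w.x w.p, F.g (w.x (-1)) z ∈ Dom F χ v.x v.p ∧ F.f (F.g (w.x (-1)) z) = z) ∧
    (∀ z ∈ Dom F χ w.x w.p, ∀ z' ∈ Dom F χ w.x w.p,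
      |F.g (w.x (-1)) z - F.g (w.x (-1)) z'| * uPes F.f χ v.x ≤
        Real.exp (-χ / 2) * (|z - z'| * uPes F.f χ w.x)) ∧
    (∀ y ∈ Dom F χ v.x v.p, F.f y ∈ Dom F χ w.x w.p → F.g (w.x (-1)) (F.f y) = y) := by
  obtain ⟨⟨hv, hq0, hq⟩, ⟨hw, hp0, hp⟩, ⟨_, _, hov⟩, hx1, _, _, hpq⟩ := he
  have hε := hs.pos
  have h1 : ε < 1 := by linarith [hs.lt_one]
  have hε4 := hs.lt_one
  simp only at hov
  change |w.x (0 + -1) - v.x 0| + _ < _ at hov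
  rw [zero_add] at hov
  have huv := one_le_uPes hv
  have huw := one_le_uPes hw
  have hw1 := one_le_uPes (NUE_shift hw (-1))
  set U := uPes F.f χ v.x with hU
  set W := uPes F.f χ w.x with hW
  set W1 := uPes F.f χ (fhatI (-1) w.x) with hW1
  have hQu : v.p * U ≤ ε := (mul_le_mul_of_nonneg_right hq (by linarith)).trans
    (Qeps_mul_u hA hε h1 hv)
  have hqε : v.p ≤ ε := hq.trans (Qeps_le_eps hA hε h1 hv)
  have hp8 : (v.p * v.p) ^ 4 ≤ v.p * v.p := by
    have : v.p * v.p ≤ 1 := by nlinarith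
    exact pow_le_of_le_one (by positivity) this (by norm_num)
  have hd0 : |w.x (-1) - v.x 0| ≤ v.p * v.p := by
    linarith [abs_nonneg (W1⁻¹ - U⁻¹)]
  have hd1 : |W1⁻¹ - U⁻¹| ≤ v.p * v.p := by
    linarith [abs_nonneg (w.x (-1) - v.x 0)]
  -- comparison of U and W1
  have hUW : U ≤ (1 + ε) * W1 := by
    have e1 : W1⁻¹ ≤ U⁻¹ + v.p * v.p := by linarith [(abs_le.1 hd1).2]
    have e2 : U⁻¹ ≤ W1⁻¹ + v.p * v.p := by linarith [(abs_le.1 hd1).1]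
    have hU0 : 0 < U := by linarith
    have hW0 : 0 < W1 := by linarith
    -- multiply e1 by U * W1
    have e3 : W1⁻¹ * (U * W1) ≤ (U⁻¹ + v.p * v.p) * (U * W1) :=
      mul_le_mul_of_nonneg_right e1 (by positivity)
    have e4 : W1⁻¹ * (U * W1) = U := by field_simp
    have e5 : (U⁻¹ + v.p * v.p) * (U * W1) = W1 + (v.p * U) * v.p * W1 := by field_simp
    rw [e4, e5] at e3
    have e6 : (v.p * U) * v.p ≤ ε := by nlinarith
    nlinarith
  have hcon : ∀ z ∈ Dom F χ w.x w.p, ∀ z' ∈ Dom F χ w.x w.p,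
      |F.g (w.x (-1)) z - F.g (w.x (-1)) z'| * U ≤
        Real.exp (-χ / 2) * (|z - z'| * W) := by
    intro z hz z' hz'
    have e1 := g_contr hA hε h1 hw (Dom_mono hp hz) (Dom_mono hp hz')
    have e2 := hs.contr
    set G := |F.g (w.x (-1)) z - F.g (w.x (-1)) z'| with hG
    have hG0 : 0 ≤ G := abs_nonneg _
    calc G * U ≤ G * ((1 + ε) * W1) := mul_le_mul_of_nonneg_left hUW hG0
      _ = (1 + ε) * (G * W1) := by ring
      _ ≤ (1 + ε) * ((Real.exp (-χ) + F.K * ε) * (|z - z'| * W)) :=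
          mul_le_mul_of_nonneg_left e1 (by linarith)
      _ = ((1 + ε) * (Real.exp (-χ) + F.K * ε)) * (|z - z'| * W) := by ring
      _ ≤ Real.exp (-χ / 2) * (|z - z'| * W) :=
          mul_le_mul_of_nonneg_right e2.le (mul_nonneg (abs_nonneg _) (by linarith))
  obtain ⟨_, ⟨hinj, _, hg0, hfg, _, _⟩, _⟩ := satA_at hA hw
  have hsub : Dom F χ w.x w.p ⊆ Metric.ball (w.x 0) (2 * F.r (w.x (-1))) :=
    (Dom_mono hp).trans (Dom_subset_ball hA hε h1 hw)
  have hmap : ∀ z ∈ Dom F χ w.x w.p, F.g (w.x (-1)) z ∈ Dom F χ v.x v.p := by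
    intro z hz
    have e1 := hcon z hz (w.x 0) (center_mem_Dom hp0.le)
    rw [hg0] at e1
    have hz' : |z - w.x 0| * W ≤ w.p := hz
    have e2 : w.p ≤ Real.exp ε * v.p := by
      rw [hpq]
      exact min_le_left _ _
    have e3 : Real.exp (-χ / 2) * (|z - w.x 0| * W) ≤
        Real.exp (-χ / 2) * (Real.exp ε * v.p) :=
      mul_le_mul_of_nonneg_left (hz'.trans e2) (Real.exp_pos _).le
    have e4 : |F.g (w.x (-1)) z - v.x 0| ≤ |F.g (w.x (-1)) z - w.x (-1)| +
        |w.x (-1) - v.x 0| := abs_sub_le _ _ _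
    change |F.g (w.x (-1)) z - v.x 0| * U ≤ v.p
    have e5 := mul_le_mul_of_nonneg_right e4 (show 0 ≤ U by linarith)
    have e6 : |w.x (-1) - v.x 0| * U ≤ ε * v.p := by
      have := mul_le_mul_of_nonneg_right hd0 (show 0 ≤ U by linarith)
      nlinarith
    have e7 := mul_le_mul_of_nonneg_right hs.into.le hq0.le
    linarith
  -- Dom v inside the injectivity ball
  have hsubv : Dom F χ v.x v.p ⊆ Metric.ball (w.x (-1)) (2 * F.r (w.x (-1))) := by
    have hρ := rho_pos hA hv
    have hρ2 := rho_rpow_le hA hv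
    have hρ3 := Qeps_le_rho hA hε h1 hv
    have hρ4 : 0 < (rho F v.x / 2) ^ F.a := Real.rpow_pos_of_pos (by linarith) _
    have e1 : rho F v.x ≤ F.dS (v.x 0) := (min_le_right _ _).trans (min_le_left _ _)
    have e2 : rho F v.x ≤ F.dS (v.x 1) := (min_le_right _ _).trans (min_le_right _ _)
    have e3 := dS_lip F (v.x 0) (w.x (-1))
    have e4 := dS_lip F (v.x 1) (w.x 0)
    rw [abs_sub_comm] at e3
    have e5 : v.p ≤ ε * (rho F v.x / 2) ^ F.a := hq.trans hρ3
    have e6 : v.p ≤ rho F v.x / 2 := by nlinarith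
    have e7 : v.p * v.p ≤ v.p := by nlinarith
    have hr : (rho F v.x / 2) ^ F.a < F.r (w.x (-1)) :=
      le_r hA hw (by linarith) (by linarith) (by linarith)
    intro y hy
    have hy' : |y - v.x 0| * U ≤ v.p := hy
    have e8 : |y - v.x 0| ≤ v.p := by nlinarith [abs_nonneg (y - v.x 0)]
    have e9 : |y - w.x (-1)| ≤ |y - v.x 0| + |v.x 0 - w.x (-1)| := abs_sub_le _ _ _
    rw [abs_sub_comm (v.x 0)] at e9
    rw [Metric.mem_ball, Real.dist_eq]
    nlinarith
  refine ⟨fun z hz => ⟨hmap z hz, hfg z (hsub hz)⟩, hcon, ?_⟩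
  intro y hy hfy
  exact hinj (hsubv (hmap _ hfy)) (hsubv hy) (hfg _ (hsub hfy))


lemma bd_seq (φ : ℝ → ℝ) (e J : ℕ → ℝ) (he : ∀ n, e n = 0 ∨ e n = 1 / 2)
    (hJ : Tendsto J atTop (𝓝 0)) (hJ2 : ∀ n, J n < 1 / 2)
    (hc : ∀ n, |φ (e (n + 1)) - e n| ≤ J n) : φ (e 0) = 0 ∨ φ (e 0) = 1 / 2 := by
  have key : ∀ a b : ℝ, ∀ᶠ n in atTop, J n < |a - b| ∨ a = b := by
    intro a b
    by_cases hab : a = b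
    · exact Eventually.of_forall fun _ => Or.inr hab
    · have : 0 < |a - b| := abs_pos.2 (sub_ne_zero.2 hab)
      exact (hJ.eventually (gt_mem_nhds this)).mono fun _ h => Or.inl h
  have hev : ∀ᶠ n in atTop, φ (e (n + 1)) = e n := by
    filter_upwards [key (φ 0) 0, key (φ 0) (1 / 2), key (φ (1 / 2)) 0,
      key (φ (1 / 2)) (1 / 2)] with n h1 h2 h3 h4
    have hcn := hc n
    rcases he (n + 1) with ha | ha <;> rcases he n with hb | hb <;> rw [ha, hb] at hcn ⊢
    · exact h1.resolve_left (not_lt.2 hcn)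
    · exact h2.resolve_left (not_lt.2 hcn)
    · exact h3.resolve_left (not_lt.2 hcn)
    · exact h4.resolve_left (not_lt.2 hcn)
  obtain ⟨N, hN⟩ := eventually_atTop.1 hev
  -- the value at `e m` is a boundary point if the relation holds beyond `m`
  have hb : ∀ m, φ (e (m + 1)) = e m → φ (e (m + 2)) = e (m + 1) →
      φ (e m) = 0 ∨ φ (e m) = 1 / 2 := by
    intro m h1 h2
    rcases he m with a0 | a0 <;> rcases he (m + 1) with a1 | a1 <;>
      rcases he (m + 2) with a2 | a2 <;> rw [a0] <;> rw [a1] at h1 h2 <;> rw [a0] at h1 <;>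
      rw [a2] at h2 <;> first | (left; linarith) | (right; linarith)
  have hdown : ∀ j, ∀ k, N ≤ k + j → φ (e (k + 1)) = e k := by
    intro j
    induction j with
    | zero => intro k hk; exact hN k hk
    | succ j ih =>
      intro k hk
      have h1 := ih (k + 1) (by omega)
      have h2 := ih (k + 2) (by omega)
      have h3 := hb (k + 1) h1 h2
      have h4 := hc k
      have h5 := hJ2 k
      rcases h3 with h3 | h3 <;> rcases he k with h6 | h6 <;> rw [h3, h6] at h4 ⊢
      · norm_num at h4
        linarith
      · norm_num at h4
        linarith
  exact hb 0 (hdown N 0 (by omega)) (hdown N 1 (by omega))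

lemma mono_or_anti {f : ℝ → ℝ} {c r : ℝ} (hinj : Set.InjOn f (Metric.ball c r))
    (hd : ∀ y ∈ Metric.ball c r, DifferentiableAt ℝ f y) :
    StrictMonoOn f (Metric.ball c r) ∨ StrictAntiOn f (Metric.ball c r) := by
  have hc : ContinuousOn f (Metric.ball c r) := fun y hy => (hd y hy).continuousAt.continuousWithinAt
  rcases le_or_gt r 0 with h | h
  · left
    intro a ha
    rw [Metric.ball_eq_empty.2 h] at ha
    exact ha.elim
  · rw [Real.ball_eq_Ioo] at hc hinj ⊢
    exact ContinuousOn.strictMonoOn_of_injOn_Ioo (by linarith) hc hinj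

/-- clamp to the boundary -/
def clampB (z : ℝ) : ℝ := if z < 0 then 0 else 1 / 2

lemma clampB_cases (z : ℝ) : clampB z = 0 ∨ clampB z = 1 / 2 := by
  unfold clampB
  split_ifs <;> simp

lemma clampB_between {z x : ℝ} (hz : z ∉ Mset) (hx : x ∈ Mset) :
    (z ≤ clampB z ∧ clampB z ≤ x) ∨ (x ≤ clampB z ∧ clampB z ≤ z) := by
  obtain ⟨h1, h2⟩ := hx
  unfold clampB
  split_ifs with h
  · left; constructor <;> linarith
  · right
    refine ⟨h2, ?_⟩
    by_contra h3
    exact hz ⟨by linarith, by linarith⟩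

lemma clampB_mem (z : ℝ) : clampB z ∈ Mset := by
  rcases clampB_cases z with h | h <;> rw [h] <;> constructor <;> norm_num

/-- backward orbit of `z` along the inverse branches of `x` -/
def backOrb (F : GoodMap) (x : ℤ → ℝ) (z : ℝ) : ℕ → ℝ
  | 0 => z
  | n + 1 => F.g (fhatI (-(n : ℤ)) x (-1)) (backOrb F x z n)

set_option maxHeartbeats 1000000 in
lemma boundary {F : GoodMap} (hA : F.SatA) {χ ε : ℝ} (hχ : 0 < χ) (hs : Small F χ ε)
    {x : ℤ → ℝ} (h : x ∈ NUE F χ) {p : ℝ}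
    (hp : ∀ k : ℕ, p ≤ Real.exp (ε * k) * Qeps F χ ε (fhatI (-(k : ℤ)) x)) {z : ℝ}
    (hzM : z ∈ Mset) (hz : z ∈ Dom F χ x p) : F.g (x (-1)) z ∈ Mset := by
  have hε := hs.pos
  have hε4 := hs.lt_one
  have h1 : ε < 1 := by linarith
  by_contra hcon
  set L := Real.exp (-χ / 2) with hL
  have hL0 : 0 < L := Real.exp_pos _
  have hL1 : L < 1 := by rw [hL, Real.exp_lt_one_iff]; linarith
  have hLe : L * Real.exp ε ≤ 1 := by
    have := hs.into
    rw [hL]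
    linarith
  set Z := backOrb F x z with hZ
  let y : ℕ → ℤ → ℝ := fun n => fhatI (-(n : ℤ)) x
  have hy : ∀ n, y n ∈ NUE F χ := fun n => NUE_shift h _
  have hy1 : ∀ n, fhatI (-1) (y n) = y (n + 1) := by
    intro n
    simp only [y, fhatI_fhatI]
    congr 1
    push_cast
    ring
  have hy2 : ∀ n, y n (-1) = y (n + 1) 0 := by
    intro n
    simp only [y, fhatI]
    congr 1
    push_cast
    ring
  have hy0 : y 0 = x := by simp only [y]; exact fhatI_zero x
  have hZs : ∀ n, Z (n + 1) = F.g (y n (-1)) (Z n) := fun n => rfl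
  have hp0 : 0 ≤ p := le_trans (mul_nonneg (abs_nonneg _) (uPes_nonneg _ _ _)) hz
  -- domain from smallness
  have hdomQ : ∀ n : ℕ, |Z n - y n 0| * uPes F.f χ (y n) ≤ L ^ n * p →
      Z n ∈ Dom F χ (y n) (Qeps F χ ε (y n)) := by
    intro n hn
    refine hn.trans ?_
    have hQ := Qeps_pos hA hε (hy n)
    calc L ^ n * p ≤ L ^ n * (Real.exp (ε * n) * Qeps F χ ε (y n)) :=
          mul_le_mul_of_nonneg_left (hp n) (by positivity)
      _ = (L * Real.exp ε) ^ n * Qeps F χ ε (y n) := by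
          have e0 : Real.exp (ε * n) = Real.exp ε ^ n := by rw [← Real.exp_nat_mul, mul_comm]
          rw [e0, mul_pow]
          ring
      _ ≤ 1 * Qeps F χ ε (y n) := by
          refine mul_le_mul_of_nonneg_right ?_ hQ.le
          exact pow_le_one₀ (by positivity) hLe
      _ = _ := one_mul _
  have hstep : ∀ n : ℕ, Z n ∈ Dom F χ (y n) (Qeps F χ ε (y n)) →
      |Z (n + 1) - y (n + 1) 0| * uPes F.f χ (y (n + 1)) ≤
        L * (|Z n - y n 0| * uPes F.f χ (y n)) := by
    intro n hn
    have e1 := g_contr hA hε h1 (hy n) hn (center_mem_Dom (Qeps_pos hA hε (hy n)).le)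
    rw [(satA_at hA (hy n)).2.1.2.2.1, hy1, ← hZs] at e1
    rw [← hy2]
    refine e1.trans (mul_le_mul_of_nonneg_right hs.contr' ?_)
    exact mul_nonneg (abs_nonneg _) (uPes_nonneg _ _ _)
  have hbd : ∀ n : ℕ, |Z n - y n 0| * uPes F.f χ (y n) ≤ L ^ n * p := by
    intro n
    induction n with
    | zero =>
      rw [pow_zero, one_mul, hy0]
      exact hz
    | succ n ih =>
      refine (hstep n (hdomQ n ih)).trans ?_
      rw [pow_succ', mul_assoc]
      exact mul_le_mul_of_nonneg_left ih hL0.le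
  have hdom := fun n => hdomQ n (hbd n)
  have hball : ∀ n, Z (n + 1) ∈ Metric.ball (y n (-1)) (2 * F.r (y n (-1))) := by
    intro n
    have e1 := hstep n (hdom n)
    have e2 : |Z n - y n 0| * uPes F.f χ (y n) ≤ Qeps F χ ε (y n) := hdom n
    have e3 := Qeps_lt_r hA hε h1 (hy n)
    have e4 := one_le_uPes (hy (n + 1))
    have e5 := r_pos' hA (hy n)
    have e6 := Qeps_pos hA hε (hy n)
    rw [Metric.mem_ball, Real.dist_eq, hy2]
    rw [hy2] at e3 e5
    have e7 : |Z (n + 1) - y (n + 1) 0| ≤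
        |Z (n + 1) - y (n + 1) 0| * uPes F.f χ (y (n + 1)) :=
      le_mul_of_one_le_right (abs_nonneg _) e4
    have e8 : L * (|Z n - y n 0| * uPes F.f χ (y n)) ≤ 1 * Qeps F χ ε (y n) :=
      mul_le_mul hL1.le e2 (mul_nonneg (abs_nonneg _) (uPes_nonneg _ _ _)) zero_le_one
    linarith
  have hfZ : ∀ n, F.f (Z (n + 1)) = Z n := by
    intro n
    exact (satA_at hA (hy n)).2.1.2.2.2.1 _ (Dom_subset_ball hA hε h1 (hy n) (hdom n))
  have hfy : ∀ n, F.f (y n (-1)) = y n 0 := by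
    intro n
    rw [inMhat_succ (hy n).1]
    norm_num
  have hZM : ∀ n, Z (n + 1) ∉ Mset := by
    intro n
    induction n with
    | zero =>
      rw [hZs, hy0]
      exact hcon
    | succ n ih =>
      intro hm
      apply ih
      rw [← hfZ]
      exact F.hmaps _ hm
  have hJ : ∀ n, |Z n - y n 0| ≤ L ^ n * (1 / 4) := by
    intro n
    have e1 := hbd n
    have e2 := one_le_uPes (hy n)
    have e3 : |Z n - y n 0| ≤ |Z n - y n 0| * uPes F.f χ (y n) :=
      le_mul_of_one_le_right (abs_nonneg _) e2
    have e4 : p ≤ 1 / 4 := by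
      have := hp 0
      have e5 := Qeps_le_eps hA hε h1 (hy 0)
      simp only [Nat.cast_zero, mul_zero, Real.exp_zero, one_mul] at this
      have e6 : Qeps F χ ε (fhatI (-((0 : ℕ) : ℤ)) x) ≤ ε := e5
      simp only [Nat.cast_zero] at e6
      linarith
    have := mul_le_mul_of_nonneg_left e4 (show 0 ≤ L ^ n by positivity)
    linarith
  have hmono : ∀ n, StrictMonoOn F.f (Metric.ball (y n (-1)) (2 * F.r (y n (-1)))) ∨
      StrictAntiOn F.f (Metric.ball (y n (-1)) (2 * F.r (y n (-1)))) := fun n =>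
    mono_or_anti (satA_at hA (hy n)).2.1.1 (satA_at hA (hy n)).2.1.2.1
  have hconv : ∀ n, Set.OrdConnected (Metric.ball (y n (-1)) (2 * F.r (y n (-1)))) := by
    intro n
    rw [Real.ball_eq_Ioo]
    exact Set.ordConnected_Ioo
  have hcen : ∀ n, y n (-1) ∈ Metric.ball (y n (-1)) (2 * F.r (y n (-1))) := fun n =>
    Metric.mem_ball_self (by linarith [r_pos' hA (hy n)])
  have hfin := bd_seq F.f (fun n => clampB (Z (n + 1))) (fun n => |Z (n + 1) - y (n + 1) 0|)
    (fun n => clampB_cases _) ?_ ?_ ?_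
  · -- final contradiction
    have hz0 : F.f (Z 1) = z := hfZ 0
    have hb0 := hball 0
    have hc0 := hcen 0
    have hJ1 : |Z 1 - y 0 (-1)| ≤ 1 / 4 := by
      have := hJ 1
      rw [pow_one, ← hy2] at this
      linarith
    have hyM : y 0 (-1) ∈ Mset := (hy 0).1.1 _
    have hbet := clampB_between (hZM 0) hyM
    have hcm := clampB_mem (Z (0 + 1))
    have hcc := clampB_cases (Z (0 + 1))
    have hnm := hZM 0
    simp only [zero_add] at hfin hb0 hbet hcm hcc hnm
    set e := clampB (Z 1) with he
    set m := 2 * e - Z 1 with hm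
    have hne : e ≠ Z 1 := by
      intro h'
      rw [h'] at hcm
      exact hnm hcm
    have hemM : m ∈ Mset := by
      obtain ⟨q1, q2⟩ := hyM
      obtain ⟨q3, q4⟩ := abs_le.1 hJ1
      rcases hcc with h' | h' <;> rcases hbet with ⟨b1, b2⟩ | ⟨b1, b2⟩ <;>
        rw [h'] at b1 b2 hm <;> rw [hm] <;>
        refine ⟨?_, ?_⟩ <;> try linarith
      · exact absurd ⟨by linarith, by linarith⟩ hnm
      · exact absurd ⟨by linarith, by linarith⟩ hnm
    have hemB : m ∈ Metric.ball (y 0 (-1)) (2 * F.r (y 0 (-1))) := by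
      rw [Metric.mem_ball, Real.dist_eq] at hb0 ⊢
      refine lt_of_le_of_lt ?_ hb0
      rcases hbet with ⟨b1, b2⟩ | ⟨b1, b2⟩
      · rw [abs_of_nonpos (by linarith : Z 1 - y 0 (-1) ≤ 0), abs_le]
        constructor <;> linarith
      · rw [abs_of_nonneg (by linarith : 0 ≤ Z 1 - y 0 (-1)), abs_le]
        constructor <;> linarith
    have hfm := F.hmaps _ hemM
    obtain ⟨f1, f2⟩ := hfm
    obtain ⟨f3, f4⟩ := hzM
    have heB : e ∈ Metric.ball (y 0 (-1)) (2 * F.r (y 0 (-1))) := by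
      rcases hbet with ⟨b1, b2⟩ | ⟨b1, b2⟩
      · exact (hconv 0).out hb0 hc0 ⟨b1, b2⟩
      · exact (hconv 0).out hc0 hb0 ⟨b1, b2⟩
    have hstrict : (F.f (Z 1) < F.f e ∧ F.f e < F.f m) ∨ (F.f m < F.f e ∧ F.f e < F.f (Z 1)) := by
      rcases lt_or_gt_of_ne hne with hlt | hlt
      · have hlt2 : m < e := by rw [hm]; linarith
        rcases hmono 0 with hh | hh
        · right; exact ⟨hh hemB heB hlt2, hh heB hb0 hlt⟩
        · left; exact ⟨hh heB hb0 hlt, hh hemB heB hlt2⟩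
      · have hlt2 : e < m := by rw [hm]; linarith
        rcases hmono 0 with hh | hh
        · left; exact ⟨hh hb0 heB hlt, hh heB hemB hlt2⟩
        · right; exact ⟨hh heB hemB hlt2, hh hb0 heB hlt⟩
    rw [hz0] at hstrict
    rcases hstrict with ⟨s1, s2⟩ | ⟨s1, s2⟩ <;> rcases hfin with h' | h' <;> rw [h'] at s1 s2 <;>
      linarith
  · -- J tends to zero
    have hg : Tendsto (fun n : ℕ => L ^ (n + 1) * (1 / 4)) atTop (𝓝 0) := by
      have := (tendsto_pow_atTop_nhds_zero_of_lt_one hL0.le hL1)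
      have := ((tendsto_add_atTop_iff_nat 1).2 this).mul_const (1 / 4 : ℝ)
      simpa using this
    exact squeeze_zero (fun n => abs_nonneg _) (fun n => hJ (n + 1)) hg
  · intro n
    have e1 := hJ (n + 1)
    have e2 : L ^ (n + 1) ≤ 1 := pow_le_one₀ hL0.le hL1.le
    linarith
  · intro n
    -- f (e (n+2)) lies between y (n+1) 0 and Z (n+1), as does e (n+1)
    have hb := hball (n + 1)
    have hc := hcen (n + 1)
    have b1 := clampB_between (hZM (n + 1)) ((hy (n + 1)).1.1 (-1))
    have b2 := clampB_between (hZM n) ((hy (n + 1)).1.1 0)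
    have hf1 := hfZ (n + 1)
    have hf2 := hfy (n + 1)
    set e2 := clampB (Z (n + 1 + 1))
    set e1 := clampB (Z (n + 1))
    have heB : e2 ∈ Metric.ball (y (n + 1) (-1)) (2 * F.r (y (n + 1) (-1))) := by
      rcases b1 with ⟨b1, b2⟩ | ⟨b1, b2⟩
      · exact (hconv (n + 1)).out hb hc ⟨b1, b2⟩
      · exact (hconv (n + 1)).out hc hb ⟨b1, b2⟩
    have hbt : (F.f (y (n + 1) (-1)) ≤ F.f e2 ∧ F.f e2 ≤ F.f (Z (n + 1 + 1))) ∨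
        (F.f (Z (n + 1 + 1)) ≤ F.f e2 ∧ F.f e2 ≤ F.f (y (n + 1) (-1))) := by
      rcases hmono (n + 1) with hh | hh
      · rcases b1 with ⟨b1, b2⟩ | ⟨b1, b2⟩
        · right; exact ⟨hh.monotoneOn hb heB b1, hh.monotoneOn heB hc b2⟩
        · left; exact ⟨hh.monotoneOn hc heB b1, hh.monotoneOn heB hb b2⟩
      · rcases b1 with ⟨b1, b2⟩ | ⟨b1, b2⟩
        · left; exact ⟨hh.antitoneOn heB hc b2, hh.antitoneOn hb heB b1⟩
        · right; exact ⟨hh.antitoneOn heB hb b2, hh.antitoneOn hc heB b1⟩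
    rw [hf1, hf2] at hbt
    rcases le_total (Z (n + 1)) (y (n + 1) 0) with hle | hle
    · rw [abs_of_nonpos (by linarith : Z (n + 1) - y (n + 1) 0 ≤ 0), abs_le]
      rcases hbt with ⟨c1, c2⟩ | ⟨c1, c2⟩ <;> rcases b2 with ⟨d1, d2⟩ | ⟨d1, d2⟩ <;>
        constructor <;> linarith
    · rw [abs_of_nonneg (by linarith : 0 ≤ Z (n + 1) - y (n + 1) 0), abs_le]
      rcases hbt with ⟨c1, c2⟩ | ⟨c1, c2⟩ <;> rcases b2 with ⟨d1, d2⟩ | ⟨d1, d2⟩ <;>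
        constructor <;> linarith


/-- terms of the infimum defining `q_ε` -/
def qterm (F : GoodMap) (χ ε : ℝ) (x : ℤ → ℝ) (k : ℕ) : ℝ :=
  Real.exp (ε * k) * Qeps F χ ε (fhatI (-(k : ℤ)) x)

lemma qeps_eq (F : GoodMap) (χ ε : ℝ) (x : ℤ → ℝ) :
    qeps F χ ε x = deltaEps ε * sInf (Set.range (qterm F χ ε x)) := by
  unfold qeps
  congr 2
  ext t
  constructor
  · rintro ⟨m, hm, rfl⟩
    refine ⟨m.natAbs, ?_⟩
    have e1 : -((m.natAbs : ℕ) : ℤ) = m := by omega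
    have e2 : ((m.natAbs : ℕ) : ℝ) = |(m : ℝ)| := by
      rw [← Int.cast_abs, Int.abs_eq_natAbs]
      simp
    unfold qterm
    rw [e1, e2]
  · rintro ⟨k, rfl⟩
    refine ⟨-(k : ℤ), by omega, ?_⟩
    unfold qterm
    push_cast
    rw [abs_neg, Nat.abs_cast]

section
variable {F : GoodMap} {χ ε : ℝ} {x : ℤ → ℝ}

lemma qterm_pos (hA : F.SatA) (hε : 0 < ε) (h : x ∈ NUE F χ) (k : ℕ) : 0 < qterm F χ ε x k :=
  mul_pos (Real.exp_pos _) (Qeps_pos hA hε (NUE_shift h _))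

lemma qterm_bdd (hA : F.SatA) (hε : 0 < ε) (h : x ∈ NUE F χ) :
    BddBelow (Set.range (qterm F χ ε x)) := by
  refine ⟨0, ?_⟩
  rintro _ ⟨k, rfl⟩
  exact (qterm_pos hA hε h k).le

lemma qeps_le_term (hA : F.SatA) (hε : 0 < ε) (h : x ∈ NUE F χ) (k : ℕ) :
    qeps F χ ε x ≤ deltaEps ε * qterm F χ ε x k := by
  rw [qeps_eq]
  exact mul_le_mul_of_nonneg_left (csInf_le (qterm_bdd hA hε h) ⟨k, rfl⟩) (deltaEps_pos ε).le

lemma qeps_le_term' (hA : F.SatA) (hε : 0 < ε) (h1 : ε < 1) (h : x ∈ NUE F χ) (k : ℕ) :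
    qeps F χ ε x ≤ Real.exp (ε * k) * Qeps F χ ε (fhatI (-(k : ℤ)) x) :=
  (qeps_le_term hA hε h k).trans
    (mul_le_of_le_one_left (qterm_pos hA hε h k).le (deltaEps_le hε h1))

lemma qeps_nonneg (hA : F.SatA) (hε : 0 < ε) (h : x ∈ NUE F χ) : 0 ≤ qeps F χ ε x := by
  rw [qeps_eq]
  refine mul_nonneg (deltaEps_pos ε).le (Real.sInf_nonneg ?_)
  rintro _ ⟨k, rfl⟩
  exact (qterm_pos hA hε h k).le

lemma qeps_le_Q (hA : F.SatA) (hε : 0 < ε) (h1 : ε < 1) (h : x ∈ NUE F χ) :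
    qeps F χ ε x ≤ Qeps F χ ε x := by
  have := qeps_le_term' hA hε h1 h 0
  simpa [fhatI_zero] using this

lemma qeps_succ (hA : F.SatA) (hε : 0 < ε) (h : x ∈ NUE F χ) :
    qeps F χ ε (fhatI 1 x) =
      min (Real.exp ε * qeps F χ ε x) (deltaEps ε * Qeps F χ ε (fhatI 1 x)) := by
  have hδ := deltaEps_pos ε
  have h' := NUE_shift h 1
  have hz : qterm F χ ε (fhatI 1 x) 0 = Qeps F χ ε (fhatI 1 x) := by
    simp [qterm, fhatI_zero]
  have hsucc : ∀ k, qterm F χ ε (fhatI 1 x) (k + 1) = Real.exp ε * qterm F χ ε x k := by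
    intro k
    unfold qterm
    rw [fhatI_fhatI, ← mul_assoc, ← Real.exp_add]
    congr 2
    · push_cast; ring
    · congr 1; push_cast; ring
  apply le_antisymm
  · apply le_min
    · have : ∀ k, qeps F χ ε (fhatI 1 x) ≤ deltaEps ε * (Real.exp ε * qterm F χ ε x k) := by
        intro k
        rw [← hsucc]
        exact qeps_le_term hA hε h' _
      have h3 : qeps F χ ε (fhatI 1 x) / (deltaEps ε * Real.exp ε) ≤
          sInf (Set.range (qterm F χ ε x)) := by
        refine le_csInf (Set.range_nonempty _) ?_
        rintro _ ⟨k, rfl⟩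
        rw [div_le_iff₀ (by positivity)]
        have := this k
        linarith
      rw [div_le_iff₀ (by positivity)] at h3
      rw [qeps_eq F χ ε x]
      linarith
    · have := qeps_le_term hA hε h' 0
      rwa [hz] at this
  · have h3 : min (Real.exp ε * qeps F χ ε x) (deltaEps ε * Qeps F χ ε (fhatI 1 x)) / deltaEps ε ≤
          sInf (Set.range (qterm F χ ε (fhatI 1 x))) := by
      refine le_csInf (Set.range_nonempty _) ?_
      rintro _ ⟨k, rfl⟩
      rw [div_le_iff₀ hδ]
      rcases k with _ | k
      · rw [hz]
        exact (min_le_right _ _).trans (mul_comm _ _).le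
      · rw [hsucc]
        refine (min_le_left _ _).trans ?_
        have := mul_le_mul_of_nonneg_left (qeps_le_term hA hε h k) (Real.exp_pos ε).le
        linarith
    rw [div_le_iff₀ hδ] at h3
    rw [qeps_eq F χ ε (fhatI 1 x)]
    linarith

/-- a positive infimum of a family of powers is attained -/
lemma inf_discrete {t : ℕ → ℝ} {c : ℝ} (hc : 0 < c) (ht : ∀ k, ∃ j : ℤ, t k = Real.exp (c * j))
    (hpos : 0 < sInf (Set.range t)) : ∃ j : ℤ, sInf (Set.range t) = Real.exp (c * j) := by
  choose j hj using ht
  have hb : BddBelow (Set.range t) := ⟨0, by rintro _ ⟨k, rfl⟩; rw [hj]; positivity⟩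
  have hbj : ∃ b : ℤ, ∀ z : ℤ, (∃ k, j k = z) → b ≤ z := by
    refine ⟨⌊Real.log (sInf (Set.range t)) / c⌋, ?_⟩
    rintro z ⟨k, rfl⟩
    have h1 := csInf_le hb ⟨k, rfl⟩
    rw [hj, ← Real.log_le_iff_le_exp hpos] at h1
    have h2 : Real.log (sInf (Set.range t)) / c ≤ j k := by
      rw [div_le_iff₀ hc]; linarith
    exact_mod_cast (Int.floor_le _).trans h2
  obtain ⟨m, ⟨k, hk⟩, hm⟩ := Int.exists_least_of_bdd hbj ⟨j 0, 0, rfl⟩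
  refine ⟨m, le_antisymm ?_ ?_⟩
  · rw [← hk, ← hj]
    exact csInf_le hb ⟨k, rfl⟩
  · refine le_csInf (Set.range_nonempty _) ?_
    rintro _ ⟨i, rfl⟩
    rw [hj]
    apply Real.exp_le_exp.2
    have := hm _ ⟨i, rfl⟩
    exact mul_le_mul_of_nonneg_left (by exact_mod_cast this) hc.le

lemma qeps_discrete (hA : F.SatA) (hε : 0 < ε) (h1 : ε < 1) (h : x ∈ NUE F χ)
    (hq : 0 < qeps F χ ε x) : ∃ l : ℕ, qeps F χ ε x = deltaEps ε * Real.exp (-(ε * l) / 3) := by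
  have hδ := deltaEps_pos ε
  have hq' := hq
  rw [qeps_eq] at hq' ⊢
  have hpos : 0 < sInf (Set.range (qterm F χ ε x)) := pos_of_mul_pos_right hq' hδ.le
  obtain ⟨j, hj⟩ := inf_discrete (c := ε / 3) (by positivity) (t := qterm F χ ε x) (by
    intro k
    obtain ⟨m, hm⟩ := (Qeps_spec hA hε (NUE_shift h (-(k : ℤ)))).1
    refine ⟨3 * k - m, ?_⟩
    unfold qterm
    rw [hm, ← Real.exp_add]
    congr 1
    push_cast
    ring) hpos
  have hle : sInf (Set.range (qterm F χ ε x)) ≤ 1 := by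
    refine (csInf_le (qterm_bdd hA hε h) ⟨0, rfl⟩).trans ?_
    have := Qeps_le_eps hA hε h1 h
    simp only [qterm, Nat.cast_zero, mul_zero, Real.exp_zero, one_mul, neg_zero, fhatI_zero]
    linarith
  rw [hj, Real.exp_le_one_iff] at hle
  have hj0 : (j : ℝ) ≤ 0 := by
    by_contra hcon
    push Not at hcon
    have : 0 < ε / 3 * j := by positivity
    linarith
  have hj1 : j ≤ 0 := by exact_mod_cast hj0
  refine ⟨j.natAbs, ?_⟩
  have e : ((j.natAbs : ℕ) : ℝ) = -j := by
    have : ((j.natAbs : ℕ) : ℤ) = -j := by omega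
    rw [← Int.cast_natCast, this, Int.cast_neg]
  rw [hj, e]
  congr 2
  ring

lemma qeps_freq (hA : F.SatA) (hε : 0 < ε) (h1 : ε < 1) (h : x ∈ NUE F χ) (s : ℕ → ℤ)
    (hl : 0 < Filter.limsup (fun n : ℕ => qeps F χ ε (fhatI (s n) x)) atTop) :
    ∃ c > 0, ∃ᶠ n in atTop, c < qeps F χ ε (fhatI (s n) x) := by
  obtain ⟨c, hc0, hc⟩ := exists_between hl
  refine ⟨c, hc0, frequently_lt_of_lt_limsup ?_ hc⟩
  refine Filter.IsBoundedUnder.isCoboundedUnder_le ?_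
  exact Filter.isBoundedUnder_of ⟨0, fun n => qeps_nonneg hA hε (NUE_shift h _)⟩

lemma qeps_pos_of_sharp (hA : F.SatA) (hε : 0 < ε) (h1 : ε < 1) (h : x ∈ NUEsharp F χ ε) (n : ℤ) :
    0 < qeps F χ ε (fhatI n x) := by
  have hN : x ∈ NUE F χ := h.1.1
  obtain ⟨c, hc0, hc⟩ := qeps_freq hA hε h1 hN (fun n => -(n : ℤ)) h.2.2
  obtain ⟨m, hm1, hm2⟩ := frequently_atTop.1 hc n.natAbs
  have hup : ∀ j : ℕ, 0 < qeps F χ ε (fhatI (-(m : ℤ) + j) x) := by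
    intro j
    induction j with
    | zero => simpa using hc0.trans hm2
    | succ j ih =>
      have e : fhatI (-(m : ℤ) + (j + 1 : ℕ)) x = fhatI 1 (fhatI (-(m : ℤ) + j) x) := by
        rw [fhatI_fhatI]
        congr 1
        push_cast
        ring
      rw [e, qeps_succ hA hε (NUE_shift hN _)]
      exact lt_min (mul_pos (Real.exp_pos _) ih)
        (mul_pos (deltaEps_pos _) (Qeps_pos hA hε (NUE_shift (NUE_shift hN _) _)))
  have := hup (n + m).toNat
  have e : -(m : ℤ) + ((n + m).toNat : ℕ) = n := by omega
  rwa [e] at this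
end

/-- the data of a point controlled by the nets -/
def Phi (F : GoodMap) (χ : ℝ) (x : ℤ → ℝ) : Fin 7 → ℝ :=
  ![x (-1), x 0, x 1, (uPes F.f χ (fhatI (-1) x))⁻¹, (uPes F.f χ x)⁻¹,
    Real.log (uPes F.f χ x), Real.log (uPes F.f χ (fhatI 1 x))]

/-- points with prescribed `Q` and `q` -/
def Cls (F : GoodMap) (χ ε : ℝ) (kl : ℕ × ℕ) : Set (ℤ → ℝ) :=
  {x | x ∈ NUE F χ ∧ Qeps F χ ε x = Real.exp (-(ε * kl.1) / 3) ∧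
    qeps F χ ε x = deltaEps ε * Real.exp (-(ε * kl.2) / 3)}

/-- mesh of the nets -/
def mesh (ε : ℝ) (l : ℕ) : ℝ := (deltaEps ε * Real.exp (-(ε * l) / 3)) ^ 8 / 16

lemma mesh_pos (ε : ℝ) (l : ℕ) : 0 < mesh ε l := by
  have := deltaEps_pos ε
  unfold mesh
  positivity

lemma deriv_lower {F : GoodMap} (hA : F.SatA) {χ ε : ℝ} (hε : 0 < ε) (h1 : ε < 1) {x : ℤ → ℝ}
    (h : x ∈ NUE F χ) : Qeps F χ ε x ≤ |deriv F.f (x 0)| := by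
  have hr := r_pos hA (h.1.1 0) (h.2.1 0) (NUE_f_not_mem h 0)
  have h2 := ((hA _ (h.1.1 0) (h.2.1 0) (NUE_f_not_mem h 0)).2.2.1.1 (x 0)
      (Metric.mem_ball_self (by linarith))).1
  refine le_trans ?_ h2
  have h3 := rho_pos hA h
  have ha := F.ha
  have h4 : (rho F x / 2) ^ F.a ≤ F.dS (x 0) ^ F.a := by
    refine Real.rpow_le_rpow (by positivity) ?_ (by linarith)
    have : rho F x ≤ F.dS (x 0) := (min_le_right _ _).trans (min_le_left _ _)
    linarith
  refine (Qeps_le_rho hA hε h1 h).trans (le_trans ?_ h4)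
  exact mul_le_of_le_one_left (by positivity) h1.le

lemma Phi_bdd {F : GoodMap} (hA : F.SatA) {χ ε : ℝ} (hε : 0 < ε) (h1 : ε < 1) (kl : ℕ × ℕ) :
    Bornology.IsBounded (Phi F χ '' Cls F χ ε kl) := by
  set q := Real.exp (-(ε * kl.1) / 3) with hq
  have hq0 : 0 < q := Real.exp_pos _
  set R := 1 + Real.exp χ * q⁻¹ * q⁻¹ + q⁻¹ with hR
  have hR1 : 1 ≤ R := by
    have : 0 ≤ Real.exp χ * q⁻¹ * q⁻¹ + q⁻¹ := by positivity
    linarith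
  refine (Metric.isBounded_closedBall (x := (0 : Fin 7 → ℝ)) (r := R)).subset ?_
  rintro _ ⟨x, ⟨hx, hQ, _⟩, rfl⟩
  have hu := one_le_uPes hx
  have hu1 := one_le_uPes (NUE_shift hx 1)
  have hum := one_le_uPes (NUE_shift hx (-1))
  have huq : uPes F.f χ x ≤ q⁻¹ := by
    have := Qeps_mul_u hA hε h1 hx
    rw [hQ] at this
    rw [← one_div, le_div_iff₀ hq0]
    linarith
  have hu1q : uPes F.f χ (fhatI 1 x) ≤ 1 + Real.exp χ * q⁻¹ * q⁻¹ := by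
    have e := uPes_le (NUE_shift hx 1)
    have e1 : fhatI 1 x (-1) = x 0 := rfl
    rw [fhatI_fhatI, e1] at e
    norm_num [fhatI_zero] at e
    refine e.trans ?_
    have hd := deriv_lower hA hε h1 hx
    rw [hQ] at hd
    have hd' : |deriv F.f (x 0)|⁻¹ ≤ q⁻¹ := inv_anti₀ hq0 hd
    gcongr
  have hMs : ∀ n, |x n| ≤ R := by
    intro n
    obtain ⟨a, b⟩ := hx.1.1 n
    rw [abs_le]
    constructor <;> linarith
  have hinv : ∀ u : ℝ, 1 ≤ u → |u⁻¹| ≤ R := by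
    intro u hu
    rw [abs_of_nonneg (by positivity)]
    exact (inv_le_one_of_one_le₀ hu).trans hR1
  have hlog : ∀ u : ℝ, 1 ≤ u → u ≤ R → |Real.log u| ≤ R := by
    intro u hu hu'
    rw [abs_of_nonneg (Real.log_nonneg hu)]
    exact (Real.log_le_self (by linarith)).trans hu'
  rw [mem_closedBall_zero_iff, pi_norm_le_iff_of_nonneg (by linarith)]
  have hqq : 0 < Real.exp χ * q⁻¹ * q⁻¹ := by positivity
  have hq1 : 0 < q⁻¹ := by positivity
  intro i
  rw [Real.norm_eq_abs]
  fin_cases i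
  · exact hMs _
  · exact hMs _
  · exact hMs _
  · exact hinv _ hum
  · exact hinv _ hu
  · exact hlog _ hu (by linarith)
  · exact hlog _ hu1 (by linarith)

lemma exists_net {F : GoodMap} (hA : F.SatA) {χ ε : ℝ} (hε : 0 < ε) (h1 : ε < 1) (kl : ℕ × ℕ) :
    ∃ N : Set (ℤ → ℝ), N ⊆ Cls F χ ε kl ∧ N.Finite ∧
      ∀ x ∈ Cls F χ ε kl, ∃ y ∈ N, ∀ i, |Phi F χ x i - Phi F χ y i| < mesh ε kl.2 := by
  have ht : TotallyBounded (Phi F χ '' Cls F χ ε kl) :=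
    (Bornology.IsBounded.isCompact_closure (Phi_bdd hA (χ := χ) hε h1 kl)).totallyBounded.subset
      subset_closure
  have := Metric.finite_approx_of_totallyBounded ht _ (mesh_pos ε kl.2)
  rw [Set.exists_subset_image_finite_and] at this
  obtain ⟨N, hN, hf, hc⟩ := this
  refine ⟨N, hN, hf, ?_⟩
  intro x hx
  have := hc ⟨x, hx, rfl⟩
  simp only [Set.mem_iUnion, Metric.mem_ball, Set.mem_image, exists_prop, exists_exists_and_eq_and] at this
  obtain ⟨y, hy, hd⟩ := this
  refine ⟨y, hy, fun i => ?_⟩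
  refine lt_of_le_of_lt ?_ hd
  rw [← Real.dist_eq]
  exact dist_le_pi_dist _ _ i

lemma shadow_exists {I : ℤ → Set ℝ} {g : ℤ → ℝ → ℝ} {U : ℤ → ℝ} {L D : ℝ} (hL0 : 0 ≤ L)
    (hL1 : L < 1) (hI : ∀ n, IsClosed (I n)) (hg : ∀ n, ∀ z ∈ I (n + 1), g n z ∈ I n)
    (hcon : ∀ n, ∀ z ∈ I (n + 1), ∀ z' ∈ I (n + 1),
      |g n z - g n z'| * U n ≤ L * (|z - z'| * U (n + 1)))
    (hU : ∀ n, 1 ≤ U n) (hD : ∀ n, ∀ z ∈ I n, ∀ z' ∈ I n, |z - z'| * U n ≤ D)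
    (c : ℤ → ℝ) (hc : ∀ n, c n ∈ I n) :
    ∃ X : ℤ → ℝ, ∀ n, X n ∈ I n ∧ g n (X (n + 1)) = X n := by
  let P : ℕ → ℤ → ℝ := fun k => Nat.rec c (fun _ Q n => g n (Q (n + 1))) k
  have hP0 : ∀ n, P 0 n = c n := fun n => rfl
  have hPs : ∀ k n, P (k + 1) n = g n (P k (n + 1)) := fun k n => rfl
  have hmem : ∀ k n, P k n ∈ I n := by
    intro k
    induction k with
    | zero => exact hc
    | succ k ih => intro n; rw [hPs]; exact hg n _ (ih _)
  have hdist : ∀ k n, |P k n - P (k + 1) n| * U n ≤ D * L ^ k := by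
    intro k
    induction k with
    | zero => intro n; rw [pow_zero, mul_one]; exact hD n _ (hmem 0 n) _ (hmem 1 n)
    | succ k ih =>
      intro n
      rw [hPs, hPs (k + 1)]
      refine (hcon n _ (hmem k _) _ (hmem (k + 1) _)).trans ?_
      have := mul_le_mul_of_nonneg_left (ih (n + 1)) hL0
      rw [pow_succ]
      linarith
  have hcau : ∀ n, CauchySeq fun k => P k n := by
    intro n
    refine cauchySeq_of_le_geometric L D hL1 fun k => ?_
    rw [Real.dist_eq]
    exact (le_mul_of_one_le_right (abs_nonneg _) (hU n)).trans (hdist k n)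
  choose X hX using fun n => cauchySeq_tendsto_of_complete (hcau n)
  have hXm : ∀ n, X n ∈ I n := fun n =>
    (hI n).mem_of_tendsto (hX n) (Eventually.of_forall fun k => hmem k n)
  refine ⟨X, fun n => ⟨hXm n, ?_⟩⟩
  have h1 : Tendsto (fun k => P (k + 1) n) atTop (𝓝 (X n)) := (tendsto_add_atTop_iff_nat 1).2 (hX n)
  refine tendsto_nhds_unique ?_ h1
  rw [tendsto_iff_dist_tendsto_zero]
  have h2 : Tendsto (fun k => L * (dist (P k (n + 1)) (X (n + 1)) * U (n + 1))) atTop (𝓝 0) := by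
    have := ((tendsto_iff_dist_tendsto_zero.1 (hX (n + 1))).mul_const (U (n + 1))).const_mul L
    simpa using this
  refine squeeze_zero (fun _ => dist_nonneg) (fun k => ?_) h2
  rw [Real.dist_eq, Real.dist_eq, hPs]
  exact (le_mul_of_one_le_right (abs_nonneg _) (hU n)).trans
    (hcon n _ (hmem _ _) _ (hXm _))

section
variable {F : GoodMap} {χ ε : ℝ}

lemma Dom_diam {x : ℤ → ℝ} {p z z' : ℝ} (hz : z ∈ Dom F χ x p) (hz' : z' ∈ Dom F χ x p) :
    |z - z'| * uPes F.f χ x ≤ 2 * p := by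
  have h1 : |z - x 0| * uPes F.f χ x ≤ p := hz
  have h2 : |z' - x 0| * uPes F.f χ x ≤ p := hz'
  have h3 : |z - z'| ≤ |z - x 0| + |z' - x 0| := by
    have : z - z' = (z - x 0) - (z' - x 0) := by ring
    rw [this]
    exact abs_sub _ _
  have := mul_le_mul_of_nonneg_right h3 (uPes_nonneg F.f χ x)
  linarith

lemma exists_shadow (hA : F.SatA) (hχ : 0 < χ) (hs : Small F χ ε) {v : ℤ → Chart}
    (hv : IsGPO F χ ε v) (hq : ∀ n, (v n).p = qeps F χ ε (v n).x) : ∃ x, Shadows F χ v x := by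
  have hε := hs.pos
  have h1 : ε < 1 := by have := hs.lt_one; linarith
  have hN : ∀ n, (v n).x ∈ NUE F χ := fun n => (hv n).1.1
  have hL1 : Real.exp (-χ / 2) < 1 := by rw [Real.exp_lt_one_iff]; linarith
  have HX := shadow_exists (I := fun n => Dom F χ (v n).x (v n).p ∩ Mset)
    (g := fun n => F.g ((v (n + 1)).x (-1))) (U := fun n => uPes F.f χ (v n).x)
    (L := Real.exp (-χ / 2)) (D := 2) (Real.exp_pos _).le hL1 ?_ ?_ ?_ ?_ ?_
    (fun n => (v n).x 0) ?_
  · obtain ⟨X, hX⟩ := HX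
    refine ⟨X, ⟨fun n => (hX n).1.2, ?_⟩, fun n => ?_⟩
    · intro n
      have e := (edge_facts hA hs (hv (n - 1))).1 (X (n - 1 + 1)) (hX (n - 1 + 1)).1.1
      rw [(hX (n - 1)).2] at e
      rw [e.2]
      congr 1
      ring
    · rw [chartRange_eq (hN n)]
      exact (hX n).1.1
  · intro n
    refine IsClosed.inter ?_ isClosed_Icc
    rw [Dom_eq (hN n)]
    exact Metric.isClosed_closedBall
  · rintro n z ⟨hz, hzM⟩
    refine ⟨((edge_facts hA hs (hv n)).1 z hz).1, ?_⟩
    refine boundary hA hχ hs (hN (n + 1)) ?_ hzM hz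
    intro k
    rw [hq]
    exact qeps_le_term' hA hε h1 (hN _) k
  · rintro n z ⟨hz, _⟩ z' ⟨hz', _⟩
    exact (edge_facts hA hs (hv n)).2.1 z hz z' hz'
  · intro n
    exact one_le_uPes (hN n)
  · rintro n z ⟨hz, _⟩ z' ⟨hz', _⟩
    refine (Dom_diam hz hz').trans ?_
    have := (hv n).1.2.2
    have := Qeps_le_eps hA hε h1 (hN n)
    linarith
  · intro n
    exact ⟨center_mem_Dom (hv n).1.2.1.le, (hN n).1.1 0⟩

lemma shadow_close (hA : F.SatA) (hs : Small F χ ε) {v w : ℤ → Chart}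
    (hv : IsGPO F χ ε v) (hw : IsGPO F χ ε w) {x y : ℤ → ℝ} (hx : Shadows F χ v x)
    (hy : Shadows F χ w y) (k : ℕ) : ∀ n : ℤ, (∀ j : ℤ, n ≤ j → j ≤ n + k → v j = w j) →
    |x n - y n| * uPes F.f χ (v n).x ≤ 2 * Real.exp (-χ / 2) ^ k := by
  have hε := hs.pos
  have h1 : ε < 1 := by have := hs.lt_one; linarith
  have hNv : ∀ n, (v n).x ∈ NUE F χ := fun n => (hv n).1.1
  have hNw : ∀ n, (w n).x ∈ NUE F χ := fun n => (hw n).1.1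
  have hdx : ∀ n, x n ∈ Dom F χ (v n).x (v n).p := fun n => by
    rw [← chartRange_eq (hNv n)]; exact hx.2 n
  have hdy : ∀ n, y n ∈ Dom F χ (w n).x (w n).p := fun n => by
    rw [← chartRange_eq (hNw n)]; exact hy.2 n
  induction k with
  | zero =>
    intro n hn
    have e := hn n le_rfl (by simp)
    have hd := hdy n
    rw [← e] at hd
    refine (Dom_diam (hdx n) hd).trans ?_
    have := (hv n).1.2.2
    have := Qeps_le_eps hA hε h1 (hNv n)
    rw [pow_zero]
    linarith
  | succ k ih =>
    intro n hn
    have ih' := ih (n + 1) (fun j h1 h2 => hn j (by omega) (by push_cast; omega))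
    have e0 := hn n le_rfl (by omega)
    have e1 := hn (n + 1) (by omega) (by push_cast; omega)
    have ef := edge_facts hA hs (hv n)
    have hd0 := hdy n
    have hd1 := hdy (n + 1)
    rw [← e0] at hd0
    rw [← e1] at hd1
    have fx : F.f (x n) = x (n + 1) := inMhat_succ hx.1 n
    have fy : F.f (y n) = y (n + 1) := inMhat_succ hy.1 n
    have gx := ef.2.2 (x n) (hdx n) (by rw [fx]; exact hdx _)
    have gy := ef.2.2 (y n) hd0 (by rw [fy]; exact hd1)
    have hc := ef.2.1 (x (n + 1)) (hdx _) (y (n + 1)) hd1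
    rw [← fx, ← fy, gx, gy, fx, fy] at hc
    refine hc.trans ?_
    have := mul_le_mul_of_nonneg_left ih' (Real.exp_pos (-χ / 2)).le
    rw [pow_succ]
    linarith

lemma shadow_close' (hA : F.SatA) (hs : Small F χ ε) {v w : ℤ → Chart}
    (hv : IsGPO F χ ε v) (hw : IsGPO F χ ε w) {x y : ℤ → ℝ} (hx : Shadows F χ v x)
    (hy : Shadows F χ w y) (k : ℕ) (n : ℤ) (h : ∀ j : ℤ, n ≤ j → j ≤ n + k → v j = w j) :
    |x n - y n| ≤ 2 * Real.exp (-χ / 2) ^ k :=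
  (le_mul_of_one_le_right (abs_nonneg _) (one_le_uPes (hv n).1.1)).trans
    (shadow_close hA hs hv hw hx hy k n h)

lemma shadow_unique (hA : F.SatA) (hχ : 0 < χ) (hs : Small F χ ε) {v : ℤ → Chart}
    (hv : IsGPO F χ ε v) {x y : ℤ → ℝ} (hx : Shadows F χ v x)
    (hy : Shadows F χ v y) : x = y := by
  have hL1 : Real.exp (-χ / 2) < 1 := by rw [Real.exp_lt_one_iff]; linarith
  funext n
  have h0 : Tendsto (fun k : ℕ => 2 * Real.exp (-χ / 2) ^ k) atTop (𝓝 0) := by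
    have := (tendsto_pow_atTop_nhds_zero_of_lt_one (Real.exp_pos (-χ / 2)).le hL1).const_mul 2
    simpa using this
  have := ge_of_tendsto' h0 fun k => shadow_close' hA hs hv hv hx hy k n fun _ _ _ => rfl
  exact sub_eq_zero.1 (abs_nonpos_iff.1 this)
end

section
variable {F : GoodMap} {χ ε : ℝ}

lemma dSigma_nonneg {V : Type*} (v w : ℤ → V) : 0 ≤ dSigma v w := by
  refine Real.sSup_nonneg ?_
  rintro _ ⟨n, _, rfl⟩
  exact (Real.exp_pos _).le

lemma dSigma_ge {V : Type*} {v w : ℤ → V} {n : ℤ} (h : v n ≠ w n) :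
    Real.exp (-|(n : ℝ)|) ≤ dSigma v w := by
  refine le_csSup ⟨1, ?_⟩ ⟨n, h, rfl⟩
  rintro _ ⟨m, _, rfl⟩
  rw [Real.exp_le_one_iff]
  linarith [abs_nonneg (m : ℝ)]

lemma holder (hA : F.SatA) (hχ : 0 < χ) :
    ∃ C > 0, ∃ α : ℝ, 0 < α ∧ α ≤ 1 ∧ ∀ ε, Small F χ ε → ∀ v w : ℤ → Chart,
      IsGPO F χ ε v → IsGPO F χ ε w → ∀ x y, Shadows F χ v x → Shadows F χ w y →
        dhat x y ≤ C * dSigma v w ^ α := by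
  set L := Real.exp (-χ / 2) with hL
  have hL0 : 0 < L := Real.exp_pos _
  have hL1 : L < 1 := by rw [hL, Real.exp_lt_one_iff]; linarith
  set θ := max L (1 / 2) with hθ
  have hθL : L ≤ θ := le_max_left _ _
  have hθ2 : 1 / 2 ≤ θ := le_max_right _ _
  have hθ1 : θ < 1 := max_lt hL1 (by norm_num)
  have hθ0 : 0 < θ := by linarith
  have hα0 : 0 < -Real.log θ := by linarith [Real.log_neg hθ0 hθ1]
  refine ⟨2 / θ, by positivity, -Real.log θ, hα0, ?_, ?_⟩
  · have h1 : Real.log (1 / 2) ≤ Real.log θ := Real.log_le_log (by norm_num) hθ2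
    have h2 : Real.log (1 / 2) = -Real.log 2 := by rw [one_div, Real.log_inv]
    have h3 := Real.log_two_lt_d9
    linarith
  intro ε hs v w hv hw x y hx hy
  have hrhs : 0 ≤ 2 / θ * dSigma v w ^ (-Real.log θ) :=
    mul_nonneg (by positivity) (Real.rpow_nonneg (dSigma_nonneg v w) _)
  refine Real.sSup_le ?_ hrhs
  rintro _ ⟨n, hn, rfl⟩
  by_cases hvw : v = w
  · subst hvw
    have := shadow_unique hA hχ hs hv hx hy
    rw [this, sub_self, abs_zero, mul_zero]
    exact hrhs
  have hex : ∃ N : ℕ, ∃ m : ℤ, m.natAbs = N ∧ v m ≠ w m := by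
    obtain ⟨m, hm⟩ := Function.ne_iff.1 hvw
    exact ⟨_, m, rfl, hm⟩
  classical
  obtain ⟨m, hmN, hm⟩ := Nat.find_spec hex
  set N := Nat.find hex with hN
  have hagree : ∀ j : ℤ, j.natAbs < N → v j = w j := by
    intro j hj
    by_contra hne
    exact Nat.find_min hex hj ⟨j, rfl, hne⟩
  have hlow : θ ^ N ≤ dSigma v w ^ (-Real.log θ) := by
    have h1 := dSigma_ge hm
    have h2 : |(m : ℝ)| = N := by
      rw [← hmN, ← Int.cast_abs, Int.abs_eq_natAbs]
      simp
    rw [h2] at h1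
    have h3 := Real.rpow_le_rpow (Real.exp_pos _).le h1 hα0.le
    refine le_trans (le_of_eq ?_) h3
    rw [← Real.exp_mul, neg_mul_neg, Real.exp_nat_mul, Real.exp_log hθ0]
  have hlow2 : 2 / θ * θ ^ N ≤ 2 / θ * dSigma v w ^ (-Real.log θ) :=
    mul_le_mul_of_nonneg_left hlow (by positivity)
  refine le_trans ?_ hlow2
  have h2n : (2 : ℝ) ^ n = (1 / 2) ^ n.natAbs := by
    have : n = -(n.natAbs : ℤ) := by omega
    conv_lhs => rw [this]
    rw [zpow_neg, zpow_natCast, one_div, inv_pow]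
  rw [h2n]
  have hC : 2 ≤ 2 / θ := by
    rw [le_div_iff₀ hθ0]
    linarith
  rcases le_or_gt N n.natAbs with hle | hlt
  · have h1 : |x n - y n| ≤ 1 / 2 := Mset_dist (hx.1.1 n) (hy.1.1 n)
    have h2 : (1 / 2 : ℝ) ^ n.natAbs ≤ θ ^ N :=
      (pow_le_pow_of_le_one (by norm_num) (by norm_num) hle).trans
        (pow_le_pow_left₀ (by norm_num) hθ2 N)
    have h3 : 0 < θ ^ N := by positivity
    calc (1 / 2 : ℝ) ^ n.natAbs * |x n - y n| ≤ θ ^ N * (1 / 2) :=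
          mul_le_mul h2 h1 (abs_nonneg _) h3.le
      _ ≤ 2 * θ ^ N := by linarith
      _ ≤ 2 / θ * θ ^ N := mul_le_mul_of_nonneg_right hC h3.le
  · obtain ⟨k, hk⟩ : ∃ k : ℕ, (k : ℤ) = N - 1 - n := ⟨(N - 1 - n : ℤ).toNat, by omega⟩
    have h1 := shadow_close' hA hs hv hw hx hy k n (fun j h1 h2 => hagree j (by omega))
    have h2 : (1 / 2 : ℝ) ^ n.natAbs ≤ 1 := pow_le_one₀ (by norm_num) (by norm_num)
    have h3 : L ^ k ≤ θ ^ (N - 1) :=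
      (pow_le_pow_left₀ hL0.le hθL k).trans
        (pow_le_pow_of_le_one hθ0.le hθ1.le (by omega))
    have h4 : θ ^ N = θ ^ (N - 1) * θ := by
      rw [← pow_succ]
      congr 1
      omega
    calc (1 / 2 : ℝ) ^ n.natAbs * |x n - y n| ≤ 1 * |x n - y n| :=
          mul_le_mul_of_nonneg_right h2 (abs_nonneg _)
      _ ≤ 2 * θ ^ (N - 1) := by linarith
      _ = 2 / θ * θ ^ N := by rw [h4]; field_simp

lemma pigeon {V : Type*} {v : ℤ → V} {R : ℤ → Prop} {T : Set V} (hT : T.Finite) {G : Set ℤ}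
    (hG : G.Infinite) (hR : ∀ n ∈ G, R n) (hv : ∀ n ∈ G, v n ∈ T) :
    ∃ c, {n : ℤ | R n ∧ v n = c}.Infinite := by
  by_contra hcon
  push Not at hcon
  refine hG ?_
  refine (hT.biUnion fun c _ => Set.not_infinite.1 (by simpa using hcon c)).subset ?_
  intro n hn
  simp only [Set.mem_iUnion]
  exact ⟨v n, hv n hn, hR n hn, rfl⟩

/-- chart of class `kl` centred at `y` -/
def mkC (ε : ℝ) (kl : ℕ × ℕ) (y : ℤ → ℝ) : Chart :=
  ⟨y, deltaEps ε * Real.exp (-(ε * kl.2) / 3)⟩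

/-- The countable family attached to a choice of nets. -/
def fam (ε : ℝ) (N : ℕ × ℕ → Set (ℤ → ℝ)) : Set Chart := ⋃ kl, mkC ε kl '' N kl

lemma fam_countable {N : ℕ × ℕ → Set (ℤ → ℝ)} (hN : ∀ kl, (N kl).Finite) :
    (fam ε N).Countable :=
  Set.countable_iUnion fun kl => ((hN kl).image _).countable

lemma fam_p {N : ℕ × ℕ → Set (ℤ → ℝ)} (hN : ∀ kl, N kl ⊆ Cls F χ ε kl) {c : Chart}
    (hc : c ∈ fam ε N) : c.p = qeps F χ ε c.x := by
  obtain ⟨kl, y, hy, rfl⟩ := Set.mem_iUnion.1 hc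
  exact (hN kl hy).2.2.symm

lemma fam_chart (hA : F.SatA) (hε : 0 < ε) (h1 : ε < 1) {N : ℕ × ℕ → Set (ℤ → ℝ)}
    (hN : ∀ kl, N kl ⊆ Cls F χ ε kl) {c : Chart} (hc : c ∈ fam ε N) : IsChart F χ ε c := by
  have hp := fam_p hN hc
  obtain ⟨kl, y, hy, rfl⟩ := Set.mem_iUnion.1 hc
  have hδ := deltaEps_pos ε
  refine ⟨(hN kl hy).1, ?_, ?_⟩
  · unfold mkC
    positivity
  · rw [hp]
    exact qeps_le_Q hA hε h1 (hN kl hy).1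

lemma edge_of_close (hA : F.SatA) (hs : Small F χ ε) {z y0 y1 : ℤ → ℝ} (hz : z ∈ NUE F χ)
    {p0 p1 : ℝ} (hp0 : p0 = qeps F χ ε z) (hp1 : p1 = qeps F χ ε (fhatI 1 z))
    (hc0 : IsChart F χ ε ⟨y0, p0⟩) (hc1 : IsChart F χ ε ⟨y1, p1⟩)
    (hQ : Qeps F χ ε y1 = Qeps F χ ε (fhatI 1 z))
    (h0 : ∀ i, |Phi F χ z i - Phi F χ y0 i| < p0 ^ 8 / 16)
    (h1 : ∀ i, |Phi F χ (fhatI 1 z) i - Phi F χ y1 i| < p1 ^ 8 / 16) :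
    Edge F χ ε ⟨y0, p0⟩ ⟨y1, p1⟩ := by
  have hε := hs.pos
  have hε1 : ε < 1 := by have := hs.lt_one; linarith
  have hpp : 0 < p0 := hc0.2.1
  have hpp1 : 0 < p1 := hc1.2.1
  have hple : p0 ≤ 1 := by
    have a := hc0.2.2
    have b := Qeps_le_eps hA hε hε1 hc0.1
    simp only at a b
    linarith
  have hrec : p1 = min (Real.exp ε * p0) (deltaEps ε * Qeps F χ ε y1) := by
    rw [hp1, hp0, hQ, qeps_succ hA hε hz]
  have h18 : p1 ^ 8 ≤ 2 * p0 ^ 8 := by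
    have a : p1 ≤ Real.exp ε * p0 := hrec.le.trans (min_le_left _ _)
    have b := pow_le_pow_left₀ hpp1.le a 8
    rw [mul_pow] at b
    have c := mul_le_mul_of_nonneg_right hs.exp8.le (show 0 ≤ p0 ^ 8 by positivity)
    linarith
  have h8 : p0 ^ 8 ≤ p0 := by
    have := pow_le_pow_of_le_one hpp.le hple (show 1 ≤ 8 by norm_num)
    simpa using this
  have hp8 : 0 < p0 ^ 8 := by positivity
  have tri : ∀ a b c : ℝ, |c - a| < p1 ^ 8 / 16 → |c - b| < p0 ^ 8 / 16 →
      |a - b| < 3 / 16 * p0 ^ 8 := by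
    intro a b c ha hb
    have : |a - b| ≤ |c - a| + |c - b| := by
      rw [show a - b = (c - b) - (c - a) by ring]
      exact (abs_sub _ _).trans (by linarith)
    linarith
  have hm0 : fhatI (-1) (fhatI 1 z) = z := by rw [fhatI_fhatI]; exact fhatI_zero z
  have a1 : |y1 (-1) - y0 0| < 3 / 16 * p0 ^ 8 := by
    refine tri _ _ (z 0) ?_ (h0 1)
    exact h1 0
  have a2 : |(uPes F.f χ (fhatI (-1) y1))⁻¹ - (uPes F.f χ y0)⁻¹| < 3 / 16 * p0 ^ 8 := by
    refine tri _ _ ((uPes F.f χ z)⁻¹) ?_ (h0 4)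
    have := h1 3
    simp only [Phi] at this
    rw [hm0] at this
    exact this
  have a3 : |y1 0 - y0 1| < 3 / 16 * p0 ^ 8 := by
    refine tri _ _ (z 1) ?_ (h0 2)
    exact h1 1
  have a4 : |Real.log (uPes F.f χ y1) - Real.log (uPes F.f χ (fhatI 1 y0))| < 3 / 16 * p0 ^ 8 := by
    refine tri _ _ (Real.log (uPes F.f χ (fhatI 1 z))) ?_ (h0 6)
    exact h1 5
  have u1 := one_le_uPes hc1.1
  have u2 := one_le_uPes (NUE_shift hc0.1 1)
  simp only at u1 u2
  have hexp : uPes F.f χ (fhatI 1 y0) / uPes F.f χ y1 =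
      Real.exp (Real.log (uPes F.f χ (fhatI 1 y0)) - Real.log (uPes F.f χ y1)) := by
    rw [Real.exp_sub, Real.exp_log (by linarith), Real.exp_log (by linarith)]
  obtain ⟨l1, l2⟩ := abs_lt.1 a4
  refine ⟨hc0, hc1, ⟨?_, ?_, ?_⟩, ?_, ?_, ?_, hrec⟩
  · simp only
    rw [div_self hpp.ne', Real.exp_le_one_iff]
    linarith
  · simp only
    rw [div_self hpp.ne', Real.one_le_exp_iff]
    exact hε.le
  · change |y1 (0 + -1) - y0 0| + |(uPes F.f χ (fhatI (-1) y1))⁻¹ - (uPes F.f χ y0)⁻¹| <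
      (p0 * p0) ^ 4
    rw [zero_add, show (p0 * p0) ^ 4 = p0 ^ 8 by ring]
    linarith
  · simp only
    rw [abs_sub_comm]
    linarith
  · simp only
    rw [fhat_eq, hexp]
    apply Real.exp_le_exp.2
    linarith
  · simp only
    rw [fhat_eq, hexp]
    apply Real.exp_le_exp.2
    linarith

lemma index_bound (hε : 0 < ε) {c : ℝ} (hc : 0 < c) :
    ∃ K : ℕ, ∀ k : ℕ, c < Real.exp (-(ε * k) / 3) → k ≤ K := by
  refine ⟨⌈-Real.log c * 3 / ε⌉₊, fun k hk => ?_⟩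
  rw [← Real.log_lt_iff_lt_exp hc] at hk
  have : (k : ℝ) ≤ -Real.log c * 3 / ε := by
    rw [le_div_iff₀ hε]
    linarith
  exact_mod_cast this.trans (Nat.le_ceil _)

lemma coding (hA : F.SatA) (hs : Small F χ ε) {N : ℕ × ℕ → Set (ℤ → ℝ)}
    (hN : ∀ kl, N kl ⊆ Cls F χ ε kl) (hNf : ∀ kl, (N kl).Finite)
    (hNc : ∀ kl, ∀ x ∈ Cls F χ ε kl, ∃ y ∈ N kl, ∀ i, |Phi F χ x i - Phi F χ y i| < mesh ε kl.2)
    {x : ℤ → ℝ} (hx : x ∈ NUEsharp F χ ε) :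
    ∃ v : ℤ → Chart, (∀ n, v n ∈ fam ε N) ∧ IsGPO F χ ε v ∧ Recurrent v ∧ Shadows F χ v x := by
  have hε := hs.pos
  have hε1 : ε < 1 := by have := hs.lt_one; linarith
  have hxN : x ∈ NUE F χ := hx.1.1
  have hn : ∀ n : ℤ, ∃ kl, fhatI n x ∈ Cls F χ ε kl := by
    intro n
    obtain ⟨k, hk⟩ := (Qeps_spec hA hε (NUE_shift hxN n)).1
    obtain ⟨l, hl⟩ := qeps_discrete hA hε hε1 (NUE_shift hxN n) (qeps_pos_of_sharp hA hε hε1 hx n)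
    exact ⟨(k, l), NUE_shift hxN n, hk, hl⟩
  choose kl hkl using hn
  choose y hyN hyc using fun n => hNc (kl n) _ (hkl n)
  have hyC : ∀ n, y n ∈ Cls F χ ε (kl n) := fun n => hN _ (hyN n)
  have hfam : ∀ n, mkC ε (kl n) (y n) ∈ fam ε N := fun n =>
    Set.mem_iUnion.2 ⟨kl n, y n, hyN n, rfl⟩
  have hchart := fun n => fam_chart hA hε hε1 hN (hfam n)
  have hrecur : ∀ s : ℕ → ℤ, Function.Injective s → ∀ R : ℤ → Prop, (∀ n : ℕ, 0 < n → R (s n)) →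
      0 < Filter.limsup (fun n : ℕ => qeps F χ ε (fhatI (s n) x)) atTop →
      ∃ c, {n : ℤ | R n ∧ mkC ε (kl n) (y n) = c}.Infinite := by
    intro s hsi R hR hl
    obtain ⟨c, hc0, hc⟩ := qeps_freq hA hε hε1 hxN s hl
    obtain ⟨K, hK⟩ := index_bound hε hc0
    have hc' := hc.and_eventually (eventually_gt_atTop 0)
    rw [Nat.frequently_atTop_iff_infinite] at hc'
    refine pigeon (T := ⋃ kl ∈ (Set.Iic K ×ˢ Set.Iic K : Set (ℕ × ℕ)), mkC ε kl '' N kl) ?_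
      (hc'.image hsi.injOn) ?_ ?_
    · exact ((Set.finite_Iic K).prod (Set.finite_Iic K)).biUnion fun kl _ => (hNf kl).image _
    · rintro _ ⟨n, ⟨_, hn⟩, rfl⟩
      exact hR n hn
    · rintro _ ⟨n, ⟨hn, _⟩, rfl⟩
      have e := hkl (s n)
      simp only [Set.mem_iUnion]
      refine ⟨kl (s n), ⟨?_, ?_⟩, y (s n), hyN _, rfl⟩
      · apply hK
        rw [← e.2.1]
        exact hn.trans_le (qeps_le_Q hA hε hε1 e.1)
      · apply hK
        rw [e.2.2] at hn
        exact hn.trans_le (mul_le_of_le_one_left (Real.exp_pos _).le (deltaEps_le hε hε1))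
  refine ⟨fun n => mkC ε (kl n) (y n), hfam, ?_, ⟨?_, ?_⟩, hxN.1, ?_⟩
  · intro n
    have e : fhatI (n + 1) x = fhatI 1 (fhatI n x) := by
      rw [fhatI_fhatI]
      congr 1
      ring
    refine edge_of_close hA hs (z := fhatI n x) (NUE_shift hxN n) (hkl n).2.2.symm ?_
      (hchart n) (hchart (n + 1)) ?_ (hyc n) ?_
    · rw [← e]; exact (hkl (n + 1)).2.2.symm
    · rw [← e, (hkl (n + 1)).2.1, (hyC (n + 1)).2.1]
    · rw [← e]; exact hyc (n + 1)
  · exact hrecur (fun n => (n : ℤ)) (fun a b h => by simpa using h) (fun n => 0 < n)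
      (fun n hn => by simpa using hn) hx.2.1
  · exact hrecur (fun n => -(n : ℤ)) (fun a b h => by simpa using h) (fun n => n < 0)
      (fun n hn => by simpa using hn) hx.2.2
  · intro n
    rw [chartRange_eq (hchart n).1]
    have hc := hchart n
    have h1 : |x n - y n 0| < mesh ε (kl n).2 := by
      have : |x (0 + n) - y n 0| < mesh ε (kl n).2 := hyc n 1
      rwa [zero_add] at this
    change |x n - y n 0| * uPes F.f χ (y n) ≤ (mkC ε (kl n) (y n)).p
    have hm : mesh ε (kl n).2 = (mkC ε (kl n) (y n)).p ^ 8 / 16 := rfl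
    rw [hm] at h1
    set p := (mkC ε (kl n) (y n)).p
    have hp0 : 0 < p := hc.2.1
    have hpQ : p ≤ Qeps F χ ε (y n) := hc.2.2
    have hQe := Qeps_le_eps hA hε hε1 (hyC n).1
    have hQu := Qeps_mul_u hA hε hε1 (hyC n).1
    have hu := one_le_uPes (hyC n).1
    have hpu : p * uPes F.f χ (y n) ≤ 1 := by
      have := mul_le_mul_of_nonneg_right hpQ (show 0 ≤ uPes F.f χ (y n) by linarith)
      linarith
    have hp7 : p ^ 7 ≤ p := by
      have := pow_le_pow_of_le_one hp0.le (by linarith) (show 1 ≤ 7 by norm_num)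
      simpa using this
    calc |x n - y n 0| * uPes F.f χ (y n) ≤ p ^ 8 / 16 * uPes F.f χ (y n) :=
          mul_le_mul_of_nonneg_right h1.le (by linarith)
      _ = p ^ 7 / 16 * (p * uPes F.f χ (y n)) := by ring
      _ ≤ p ^ 7 / 16 * 1 := mul_le_mul_of_nonneg_left hpu (by positivity)
      _ ≤ p := by linarith
end

/-- properties of the triple `(Σ, σ, prj)` (Proposition 3.5). -/
theorem pi_properties (F : GoodMap) (hA : F.SatA) (χ : ℝ) (hχ : 0 < χ) :
    ∃ ε₀ > 0, ∀ ε : ℝ, 0 < ε → ε < ε₀ →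
      ∃ A : Set Chart, A.Countable ∧ (∀ c ∈ A, IsChart F χ ε c) ∧
      ∃ prj : (ℤ → Chart) → (ℤ → ℝ),
        -- prj assigns to each ε-gpo the unique point it shadows
        (∀ v : ℤ → Chart, (∀ n, v n ∈ A) → IsGPO F χ ε v → Shadows F χ v (prj v)) ∧
        -- (1) prj is Hölder continuous
        (∃ C > 0, ∃ α : ℝ, 0 < α ∧ α ≤ 1 ∧
          ∀ v w : ℤ → Chart, (∀ n, v n ∈ A) → IsGPO F χ ε v →
            (∀ n, w n ∈ A) → IsGPO F χ ε w →
            dhat (prj v) (prj w) ≤ C * dSigma v w ^ α) ∧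
        -- (2) prj ∘ σ = f̂ ∘ prj
        (∀ v : ℤ → Chart, (∀ n, v n ∈ A) → IsGPO F χ ε v →
          prj (fun n => v (n + 1)) = fhat (prj v)) ∧
        -- (3) prj[Σ^#] ⊇ NUE^#_χ
        (∀ x ∈ NUEsharp F χ ε, ∃ v : ℤ → Chart,
          (∀ n, v n ∈ A) ∧ IsGPO F χ ε v ∧ Recurrent v ∧ prj v = x) := by
  classical
  obtain ⟨ε₀, hε₀, hsm⟩ := exists_small F hχ
  obtain ⟨C, hC, α, hα0, hα1, hHol⟩ := holder hA hχ
  refine ⟨ε₀, hε₀, fun ε hε hεlt => ?_⟩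
  have hs := hsm ε hε hεlt
  have hε1 : ε < 1 := by have := hs.lt_one; linarith
  choose N hN hNf hNc using exists_net hA (χ := χ) hε hε1
  have hshad : ∀ v : ℤ → Chart, (∀ n, v n ∈ fam ε N) → IsGPO F χ ε v → ∃ x, Shadows F χ v x :=
    fun v hv hg => exists_shadow hA hχ hs hg fun n => fam_p hN (hv n)
  let prj : (ℤ → Chart) → (ℤ → ℝ) := fun v =>
    if h : ∃ x, Shadows F χ v x then h.choose else fun _ => 0
  have hprj : ∀ v : ℤ → Chart, (∀ n, v n ∈ fam ε N) → IsGPO F χ ε v →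
      Shadows F χ v (prj v) := by
    intro v hv hg
    have h := hshad v hv hg
    simp only [prj, dif_pos h]
    exact h.choose_spec
  refine ⟨fam ε N, fam_countable hNf, fun c hc => fam_chart hA hε hε1 hN hc, prj, hprj,
    ⟨C, hC, α, hα0, hα1, ?_⟩, ?_, ?_⟩
  · intro v w hvA hv hwA hw
    exact hHol ε hs v w hv hw _ _ (hprj v hvA hv) (hprj w hwA hw)
  · intro v hvA hv
    have hg : IsGPO F χ ε (fun n => v (n + 1)) := fun n => hv (n + 1)
    refine shadow_unique hA hχ hs hg (hprj _ (fun n => hvA (n + 1)) hg) ?_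
    have h := hprj v hvA hv
    exact ⟨inMhat_shift h.1 1, fun n => h.2 (n + 1)⟩
  · intro x hx
    obtain ⟨v, hvA, hv, hrec, hsh⟩ := coding hA hs hN hNf hNc hx
    exact ⟨v, hvA, hv, hrec, shadow_unique hA hχ hs hv (hprj v hvA hv) hsh⟩

end OneDim
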